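/- Let 1 < p < ∞, let ω be a radial weight, and let ν : [0,1) → (0,∞) be a measurable function with ν ∈ L¹_ω([0,1)), so that ων is a radial weight. Then the following statements are equivalent: (i) there exists C > 0 such that ‖H_ω(f) + H*_ω(f)‖_{L^p_{ων}} ≤ C ‖f‖_{L^p_{ων}} for every nonnegative f ∈ L^p_{ων}; (ii) there exists C > 0 such that ‖S_{ω₁,rad}(f)‖_{L^p_{ων}} ≤ C ‖f‖_{L^p_{ων}} for every nonnegative f ∈ L^p_{ων}; (iii) there exists C > 0 such that ‖M_{ω₁,rad}(f)‖_{L^p_{ων}} ≤ C ‖f‖_{L^p_{ων}} for every f ∈ L^p_{ων}; (iv) A_p(ω,ων) < ∞. -/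

import Mathlib

open MeasureTheory Set Metric
open scoped ENNReal NNReal

noncomputable section

/-- `ω̂(r) = ∫_r^1 ω(s) ds`. -/
def hatw (w : ℝ → ℝ) (r : ℝ) : ℝ := ∫ s in Set.Ioo r 1, w s

/-- `ω̂₁(r) = ∫_r^1 s ω(s) ds`. -/
def hat1 (w : ℝ → ℝ) (r : ℝ) : ℝ := ∫ s in Set.Ioo r 1, s * w s

/-- A radial weight: nonnegative, integrable on `[0,1)`, with `ω̂(r) > 0` for `0 ≤ r < 1`. -/
def IsRadialWeight (w : ℝ → ℝ) : Prop :=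
  (∀ r ∈ Set.Ico (0:ℝ) 1, 0 ≤ w r) ∧ MeasureTheory.IntegrableOn w (Set.Ico (0:ℝ) 1) ∧
    ∀ r ∈ Set.Ico (0:ℝ) 1, 0 < hatw w r

/-- The `L^p_ν` norm (with `dA` = area measure divided by `π`) of a real-valued function on
the unit disc. -/
def LpR (p : ℝ) (v : ℝ → ℝ) (f : ℂ → ℝ) : ℝ≥0∞ :=
  ((∫⁻ z in Metric.ball (0:ℂ) 1, ENNReal.ofReal (|f z| ^ p * v ‖z‖)) /
    ENNReal.ofReal Real.pi) ^ (1 / p)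

/-- The `L^p_ν` norm of an `ℝ≥0∞`-valued function on the unit disc. -/
def LpE (p : ℝ) (v : ℝ → ℝ) (g : ℂ → ℝ≥0∞) : ℝ≥0∞ :=
  ((∫⁻ z in Metric.ball (0:ℂ) 1, g z ^ p * ENNReal.ofReal (v ‖z‖)) /
    ENNReal.ofReal Real.pi) ^ (1 / p)

/-- The averaging operator `H_ω(f)(z) = (1/ω̂₁(|z|)) ∫_{|z|}^1 f(s z/|z|) s ω(s) ds`. -/
def HE (w : ℝ → ℝ) (f : ℂ → ℝ) (z : ℂ) : ℝ≥0∞ :=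
  (∫⁻ s in Set.Ioo ‖z‖ 1, ENNReal.ofReal (f ((s / ‖z‖) • z) * (s * w s))) /
    ENNReal.ofReal (hat1 w ‖z‖)

/-- The adjoint `H*_ω(f)(z) = ∫_0^{|z|} f(s z/|z|) s ω(s)/ω̂₁(s) ds`. -/
def HstarE (w : ℝ → ℝ) (f : ℂ → ℝ) (z : ℂ) : ℝ≥0∞ :=
  ∫⁻ s in Set.Ioo 0 ‖z‖,
    ENNReal.ofReal (f ((s / ‖z‖) • z) * (s * w s)) / ENNReal.ofReal (hat1 w s)

/-- The Stieltjes-type operator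
`S_{ω₁,rad}(f)(z) = ∫_0^1 f(s z/|z|) s ω(s)/(ω̂₁(s)+ω̂₁(|z|)) ds`. -/
def SE (w : ℝ → ℝ) (f : ℂ → ℝ) (z : ℂ) : ℝ≥0∞ :=
  ∫⁻ s in Set.Ioo (0:ℝ) 1,
    ENNReal.ofReal (f ((s / ‖z‖) • z) * (s * w s)) /
      ENNReal.ofReal (hat1 w s + hat1 w ‖z‖)

/-- The Hörmander-type maximal function
`M_{ω₁,rad}(f)(z) = sup_{0 ≤ b < |z|} (1/ω̂₁(b)) ∫_b^1 |f(s z/|z|)| s ω(s) ds`. -/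
def MradE (w : ℝ → ℝ) (f : ℂ → ℝ) (z : ℂ) : ℝ≥0∞ :=
  ⨆ b ∈ Set.Ico (0:ℝ) ‖z‖,
    (∫⁻ s in Set.Ioo b 1, ENNReal.ofReal (|f ((s / ‖z‖) • z)| * (s * w s))) /
      ENNReal.ofReal (hat1 w b)

/-- `A_p(ω,ων) = sup_{0≤r<1} (∫_r¹ s ω ν)^{1/p} (∫_r¹ s ω ν^{-p'/p})^{1/p'} / ω̂₁(r)`,
for a positive function `ν` (note `p' = p/(p-1)` and `1/p' = 1 - 1/p`). -/
def Ap2 (p : ℝ) (w v : ℝ → ℝ) : ℝ≥0∞ :=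
  ⨆ r ∈ Set.Ico (0:ℝ) 1,
    (∫⁻ s in Set.Ioo r 1, ENNReal.ofReal (s * w s * v s)) ^ (1 / p) *
      (∫⁻ s in Set.Ioo r 1,
        ENNReal.ofReal (s * w s * v s ^ (-(p / (p - 1)) / p))) ^ (1 - 1 / p) /
      ENNReal.ofReal (hat1 w r)

/-!
Pointwise, `S ≤ H + H*` and `M f ≤ 2 S |f|`, so (i) ⇒ (ii) ⇒ (iii).

In polar coordinates a radial function turns the boundedness of `M` into an inequality for the
averages over the tails `[b, 1)` of the measure `s ω(s) ds`; taking the supremum over all radial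
functions supported on a tail gives `A_p` by the converse of Hölder's inequality.

Conversely, on each ray `H` and `H*` are the tail average and its adjoint for `μ = s ω(s) ds`. By
duality `H*` on `L^p` is controlled by the tail average on the dual weighted `L^{p'}`, and the tail
average by the maximal function over tails. For that function and an arbitrary measure the weak
type `(1, 1)` inequality is immediate because tails are nested, hence it is bounded on every
unweighted `L^q`, `q > 1`. With `σ = ν^{-p'/p}`, the `A_p` condition upgrades this to the weighted
bound through Lerner's inequality
`(avg_μ g)^{p-1} ≤ A^p avg_{νμ} (M_{σμ}(g / σ)^{p-1} / ν)` on every tail.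
-/

lemma rpow_eq_rpow_sub_one_mul {p : ℝ} (hp : 1 ≤ p) (x : ℝ≥0∞) : x ^ p = x ^ (p - 1) * x := by
  simpa using ENNReal.rpow_add_of_nonneg (x := x) (p - 1) 1 (sub_nonneg.mpr hp) zero_le_one

lemma rpow_one_div_le_of_le_mul_rpow_one_div {p q : ℝ} (hpq : p.HolderConjugate q) {X D : ℝ≥0∞}
    (hX : X ≠ ⊤) (h : X ≤ D * X ^ (1 / q)) : X ^ (1 / p) ≤ D := by
  rcases eq_or_ne X 0 with rfl | hX0
  · simp [hpq.pos]
  have hsplit : X ^ (1 / p) * X ^ (1 / q) = X := by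
    rw [← ENNReal.rpow_add _ _ hX0 hX, one_div, one_div, hpq.inv_add_inv_eq_one, ENNReal.rpow_one]
  refine (ENNReal.mul_le_mul_iff_left ?_ ?_).mp (hsplit.trans_le h)
  · exact (ENNReal.rpow_pos (pos_iff_ne_zero.mpr hX0) hX).ne'
  · exact ENNReal.rpow_ne_top_of_nonneg (one_div_nonneg.mpr hpq.symm.nonneg) hX

lemma setLIntegral_Ioi_ofReal_rpow_eq_top (c : ℝ) :
    ∫⁻ l in Ioi (0 : ℝ), ENNReal.ofReal (l ^ c) = ⊤ := by
  by_contra hfin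
  refine not_integrableOn_Ioi_rpow c
    ((lintegral_ofReal_ne_top_iff_integrable (by fun_prop) ?_).mp hfin)
  filter_upwards [ae_restrict_mem measurableSet_Ioi] with l hl
  exact Real.rpow_nonneg (le_of_lt hl) c

section LayerCake

variable {α : Type*} [MeasurableSpace α] {μ : Measure α} {F : α → ℝ≥0∞} {q : ℝ}

lemma lintegral_rpow_eq_top_of_measure_eq_top_ne_zero (hq : 0 < q) (hF : AEMeasurable F μ)
    (h : μ {x | F x = ⊤} ≠ 0) : ∫⁻ x, F x ^ q ∂μ = ⊤ := by
  refine lintegral_eq_top_of_measure_eq_top_ne_zero (hF.pow_const q) ?_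
  simpa [ENNReal.rpow_eq_top_iff_of_pos hq] using h

lemma lintegral_rpow_eq_lintegral_meas_ofReal_lt_mul (hq : 0 < q) (hF : AEMeasurable F μ) :
    ∫⁻ x, F x ^ q ∂μ =
      ENNReal.ofReal q *
        ∫⁻ l in Ioi (0 : ℝ), μ {x | ENNReal.ofReal l < F x} * ENNReal.ofReal (l ^ (q - 1)) := by
  by_cases htop : μ {x | F x = ⊤} = 0
  · have hfin : ∀ᵐ x ∂μ, F x ≠ ⊤ := by simpa [ae_iff] using htop
    calc ∫⁻ x, F x ^ q ∂μ
        = ∫⁻ x, ENNReal.ofReal ((F x).toReal ^ q) ∂μ := by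
          refine lintegral_congr_ae (hfin.mono fun x hx => ?_)
          dsimp only
          rw [← ENNReal.ofReal_rpow_of_nonneg ENNReal.toReal_nonneg hq.le, ENNReal.ofReal_toReal hx]
      _ = ENNReal.ofReal q *
            ∫⁻ l in Ioi (0 : ℝ), μ {x | l < (F x).toReal} * ENNReal.ofReal (l ^ (q - 1)) :=
          lintegral_rpow_eq_lintegral_meas_lt_mul μ (.of_forall fun _ => ENNReal.toReal_nonneg)
            hF.ennreal_toReal hq
      _ = _ := by
          congr 1
          refine setLIntegral_congr_fun measurableSet_Ioi fun l hl => ?_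
          congr 1
          refine measure_congr (hfin.mono fun x hx => propext ?_)
          exact (ENNReal.ofReal_lt_iff_lt_toReal (le_of_lt hl) hx).symm
  · have htail (l : ℝ) : μ {x | F x = ⊤} * ENNReal.ofReal (l ^ (q - 1)) ≤
        μ {x | ENNReal.ofReal l < F x} * ENNReal.ofReal (l ^ (q - 1)) := by
      gcongr with x
      rintro hx
      simp [hx]
    have hint : ∫⁻ l in Ioi (0 : ℝ),
        μ {x | ENNReal.ofReal l < F x} * ENNReal.ofReal (l ^ (q - 1)) = ⊤ := by
      refine top_le_iff.mp (le_of_eq_of_le ?_ (lintegral_mono htail))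
      rw [lintegral_const_mul _ (by fun_prop), setLIntegral_Ioi_ofReal_rpow_eq_top,
        ENNReal.mul_top htop]
    rw [lintegral_rpow_eq_top_of_measure_eq_top_ne_zero hq hF htop, hint,
      ENNReal.mul_top (by simpa using hq)]

end LayerCake

section DualWeights

lemma eq_rpow_one_sub_of_rpow_mul_rpow_eq_one {p q : ℝ} (hpq : p.HolderConjugate q) {x y : ℝ≥0∞}
    (h : x ^ (1 / p) * y ^ (1 / q) = 1) : y = x ^ (1 - q) := by
  have hy : y ^ (1 / q) = x ^ (-(1 / p)) := by
    rw [ENNReal.rpow_neg]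
    exact ENNReal.eq_inv_of_mul_eq_one_left ((mul_comm _ _).trans h)
  have hexp : -(1 / p) * q = 1 - q := by linear_combination -hpq.symm.div_conj_eq_sub_one
  rw [← hexp, ENNReal.rpow_mul, ← hy, ← ENNReal.rpow_mul, one_div_mul_cancel hpq.symm.ne_zero,
    ENNReal.rpow_one]

lemma ne_zero_of_rpow_mul_rpow_eq_one {a b : ℝ} (ha : 0 < a) {x y : ℝ≥0∞}
    (h : x ^ a * y ^ b = 1) : x ≠ 0 := by
  rintro rfl
  simp [ENNReal.zero_rpow_of_pos ha] at h

variable {α : Type*} [MeasurableSpace α] {p q : ℝ} {μ : Measure α} {v σ : α → ℝ≥0∞}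

/-- Weights `v` and `σ` that are dual for the conjugate exponents `p` and `q`, that is,
`σ = v ^ (-q / p)`. The relation is recorded in the form `v ^ (1 / p) * σ ^ (1 / q) = 1`, which is
symmetric in `(p, v)` and `(q, σ)` and forces both weights to be positive and finite. -/
structure IsDualWeightPair (p q : ℝ) (μ : Measure α) (v σ : α → ℝ≥0∞) : Prop where
  holderConjugate : p.HolderConjugate q
  measurable_left : Measurable v
  measurable_right : Measurable σ
  rpow_mul_rpow_eq_one : ∀ᵐ x ∂μ, v x ^ (1 / p) * σ x ^ (1 / q) = 1

namespace IsDualWeightPair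

lemma symm (h : IsDualWeightPair p q μ v σ) : IsDualWeightPair q p μ σ v where
  holderConjugate := h.holderConjugate.symm
  measurable_left := h.measurable_right
  measurable_right := h.measurable_left
  rpow_mul_rpow_eq_one := h.rpow_mul_rpow_eq_one.mono fun _ hx => (mul_comm _ _).trans hx

lemma restrict (h : IsDualWeightPair p q μ v σ) (S : Set α) :
    IsDualWeightPair p q (μ.restrict S) v σ where
  __ := h
  rpow_mul_rpow_eq_one := ae_restrict_of_ae h.rpow_mul_rpow_eq_one

lemma ae_left_ne_zero (h : IsDualWeightPair p q μ v σ) : ∀ᵐ x ∂μ, v x ≠ 0 :=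
  h.rpow_mul_rpow_eq_one.mono fun _ hx =>
    ne_zero_of_rpow_mul_rpow_eq_one (one_div_pos.mpr h.holderConjugate.pos) hx

lemma ae_right_eq_rpow (h : IsDualWeightPair p q μ v σ) : ∀ᵐ x ∂μ, σ x = v x ^ (1 - q) :=
  h.rpow_mul_rpow_eq_one.mono fun _ hx =>
    eq_rpow_one_sub_of_rpow_mul_rpow_eq_one h.holderConjugate hx

lemma ae_left_ne_top (h : IsDualWeightPair p q μ v σ) : ∀ᵐ x ∂μ, v x ≠ ⊤ := by
  filter_upwards [h.ae_right_eq_rpow, h.symm.ae_left_ne_zero] with x hx hσ htop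
  rw [htop, ENNReal.top_rpow_of_neg (by linarith [h.holderConjugate.symm.lt])] at hx
  exact hσ hx

lemma ae_rpow_mul_right (h : IsDualWeightPair p q μ v σ) : ∀ᵐ x ∂μ, v x ^ q * σ x = v x := by
  filter_upwards [h.ae_right_eq_rpow, h.ae_left_ne_zero, h.ae_left_ne_top] with x hx h0 htop
  rw [hx, ← ENNReal.rpow_add _ _ h0 htop, add_sub_cancel, ENNReal.rpow_one]

lemma lintegral_mul_rpow (h : IsDualWeightPair p q μ v σ) {F : α → ℝ≥0∞} (hF : Measurable F) :
    ∫⁻ x, (F x * v x) ^ q ∂μ.withDensity σ = ∫⁻ x, F x ^ q ∂μ.withDensity v := by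
  have hv := h.measurable_left
  rw [lintegral_withDensity_eq_lintegral_mul _ h.measurable_right (by fun_prop),
    lintegral_withDensity_eq_lintegral_mul _ hv (by fun_prop)]
  refine lintegral_congr_ae (h.ae_rpow_mul_right.mono fun x hx => ?_)
  simp only [Pi.mul_apply]
  rw [ENNReal.mul_rpow_of_nonneg _ _ h.holderConjugate.symm.nonneg, mul_comm, mul_assoc, hx,
    mul_comm]

lemma lintegral_div_rpow (h : IsDualWeightPair p q μ v σ) {F : α → ℝ≥0∞} (hF : Measurable F) :
    ∫⁻ x, (F x / v x) ^ q ∂μ.withDensity v = ∫⁻ x, F x ^ q ∂μ.withDensity σ := by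
  have hv := h.measurable_left
  rw [← h.lintegral_mul_rpow (by fun_prop)]
  refine lintegral_congr_ae ((withDensity_absolutelyContinuous _ _).ae_le ?_)
  filter_upwards [h.ae_left_ne_zero, h.ae_left_ne_top] with x h0 htop
  rw [ENNReal.div_mul_cancel h0 htop]

lemma setLIntegral_div (h : IsDualWeightPair p q μ v σ) {F : α → ℝ≥0∞} (hF : Measurable F)
    {S : Set α} (hS : MeasurableSet S) :
    ∫⁻ x in S, F x / v x ∂μ.withDensity v = ∫⁻ x in S, F x ∂μ := by
  have hv := h.measurable_left
  rw [setLIntegral_withDensity_eq_setLIntegral_mul _ hv (by fun_prop) hS]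
  refine lintegral_congr_ae (ae_restrict_of_ae ?_)
  filter_upwards [h.ae_left_ne_zero, h.ae_left_ne_top] with x h0 htop
  exact ENNReal.mul_div_cancel h0 htop

lemma sigmaFinite_withDensity_left (h : IsDualWeightPair p q μ v σ) [SigmaFinite μ] :
    SigmaFinite (μ.withDensity v) :=
  SigmaFinite.withDensity_of_ne_top h.ae_left_ne_top

lemma lintegral_mul_le_Lp_mul_Lq (h : IsDualWeightPair p q μ v σ) {f g : α → ℝ≥0∞}
    (hf : Measurable f) (hg : Measurable g) :
    ∫⁻ x, f x * g x ∂μ ≤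
      (∫⁻ x, f x ^ p ∂μ.withDensity v) ^ (1 / p) *
        (∫⁻ x, g x ^ q ∂μ.withDensity σ) ^ (1 / q) := by
  have hv := h.measurable_left
  have hσ := h.measurable_right
  have hp := h.holderConjugate.pos
  have hq := h.holderConjugate.symm.pos
  calc ∫⁻ x, f x * g x ∂μ
      = ∫⁻ x, (f x * v x ^ (1 / p)) * (g x * σ x ^ (1 / q)) ∂μ := by
        refine lintegral_congr_ae (h.rpow_mul_rpow_eq_one.mono fun x hx => ?_)
        dsimp only
        rw [mul_mul_mul_comm, hx, mul_one]
    _ ≤ (∫⁻ x, (f x * v x ^ (1 / p)) ^ p ∂μ) ^ (1 / p) *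
          (∫⁻ x, (g x * σ x ^ (1 / q)) ^ q ∂μ) ^ (1 / q) :=
        ENNReal.lintegral_mul_le_Lp_mul_Lq μ h.holderConjugate (by fun_prop) (by fun_prop)
    _ = _ := by
        rw [lintegral_withDensity_eq_lintegral_mul _ hv (by fun_prop),
          lintegral_withDensity_eq_lintegral_mul _ hσ (by fun_prop)]
        simp only [Pi.mul_apply, ENNReal.mul_rpow_of_nonneg _ _ hp.le,
          ENNReal.mul_rpow_of_nonneg _ _ hq.le, ← ENNReal.rpow_mul, one_div_mul_cancel hp.ne',
          one_div_mul_cancel hq.ne', ENNReal.rpow_one, mul_comm]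

lemma withDensity_left_ne_zero (h : IsDualWeightPair p q μ v σ) {S : Set α}
    (h0 : μ S ≠ 0) : (μ.withDensity v) S ≠ 0 := fun hS =>
  h0 (withDensity_absolutelyContinuous' h.measurable_left.aemeasurable h.ae_left_ne_zero hS)

end IsDualWeightPair

lemma lintegral_le_of_forall_simpleFunc_le {ν : Measure α} [SigmaFinite ν] {f : α → ℝ≥0∞}
    {D : ℝ≥0∞} (h : ∀ g : SimpleFunc α ℝ≥0, (∀ x, g x ≤ f x) → ∫⁻ x, g x ∂ν ≠ ⊤ →
      ∫⁻ x, g x ∂ν ≤ D) :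
    ∫⁻ x, f x ∂ν ≤ D := by
  by_contra! hlt
  simp_rw [lintegral_eq_nnreal, lt_iSup_iff] at hlt
  obtain ⟨g, hgf, hg⟩ := hlt
  rw [← SimpleFunc.lintegral_eq_lintegral] at hg
  obtain ⟨k, hkg, hk_top, hk⟩ := SimpleFunc.exists_lt_lintegral_simpleFunc_of_lt_lintegral hg
  exact hk.not_ge (h k (fun x => (ENNReal.coe_le_coe.mpr (hkg x)).trans (hgf x)) hk_top.ne)

lemma IsDualWeightPair.rpow_lintegral_le_of_forall (h : IsDualWeightPair p q μ v σ) [SigmaFinite μ]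
    {F : α → ℝ≥0∞} {D : ℝ≥0∞}
    (hD : ∀ K : α → ℝ≥0, Measurable K → ∫⁻ x, (K x : ℝ≥0∞) ^ q ∂μ.withDensity σ ≠ ⊤ →
      ∫⁻ x, K x * F x ∂μ ≤ D * (∫⁻ x, (K x : ℝ≥0∞) ^ q ∂μ.withDensity σ) ^ (1 / q)) :
    (∫⁻ x, F x ^ p ∂μ.withDensity v) ^ (1 / p) ≤ D := by
  have hp := h.holderConjugate.pos
  have hv := h.measurable_left
  have := h.sigmaFinite_withDensity_left
  rw [one_div, ENNReal.rpow_inv_le_iff hp]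
  refine lintegral_le_of_forall_simpleFunc_le fun f hfF hf_top => ?_
  let k (x : α) : ℝ≥0∞ := (f x : ℝ≥0∞) ^ (1 / p)
  have hf : Measurable fun x => (f x : ℝ≥0∞) := f.measurable.coe_nnreal_ennreal
  have hk : Measurable k := hf.pow_const _
  have hkp (x : α) : k x ^ p = f x := by simp only [k, one_div, ENNReal.rpow_inv_rpow hp.ne']
  have hkF (x : α) : k x ≤ F x := by
    rw [← ENNReal.rpow_le_rpow_iff hp, hkp]
    exact hfF x
  simp only [← hkp] at hf_top ⊢
  rw [← ENNReal.rpow_inv_le_iff hp, ← one_div]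
  refine rpow_one_div_le_of_le_mul_rpow_one_div h.holderConjugate hf_top ?_
  let K (x : α) : ℝ≥0 := (k x ^ (p - 1) * v x).toNNReal
  have hK : ∀ᵐ x ∂μ, (K x : ℝ≥0∞) = k x ^ (p - 1) * v x := h.ae_left_ne_top.mono fun x hx =>
    ENNReal.coe_toNNReal (ENNReal.mul_ne_top (ENNReal.rpow_ne_top_of_nonneg
      h.holderConjugate.sub_one_pos.le (by finiteness)) hx)
  have hKq : ∫⁻ x, (K x : ℝ≥0∞) ^ q ∂μ.withDensity σ = ∫⁻ x, k x ^ p ∂μ.withDensity v := by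
    calc ∫⁻ x, (K x : ℝ≥0∞) ^ q ∂μ.withDensity σ
        = ∫⁻ x, (k x ^ (p - 1) * v x) ^ q ∂μ.withDensity σ :=
          lintegral_congr_ae ((withDensity_absolutelyContinuous _ _).ae_le
            (hK.mono fun x hx => by dsimp only; rw [hx]))
      _ = ∫⁻ x, (k x ^ (p - 1)) ^ q ∂μ.withDensity v := h.lintegral_mul_rpow (by fun_prop)
      _ = ∫⁻ x, k x ^ p ∂μ.withDensity v := by
          simp only [← ENNReal.rpow_mul, h.holderConjugate.sub_one_mul_conj]
  have hkK : ∫⁻ x, k x ^ p ∂μ.withDensity v ≤ ∫⁻ x, K x * F x ∂μ := by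
    rw [lintegral_withDensity_eq_lintegral_mul _ hv (by fun_prop)]
    refine lintegral_mono_ae (hK.mono fun x hx => ?_)
    rw [Pi.mul_apply, rpow_eq_rpow_sub_one_mul h.holderConjugate.lt.le, hx, mul_left_comm,
      ← mul_assoc]
    gcongr
    exact hkF x
  rw [← hKq] at hkK ⊢
  exact hkK.trans (hD K (by fun_prop) (hKq ▸ hf_top))

lemma IsDualWeightPair.rpow_mul_rpow_le_of_forall (h : IsDualWeightPair p q μ v σ)
    [SigmaFinite μ] {S : Set α} (hS : MeasurableSet S) {D : ℝ≥0∞}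
    (hD : ∀ K : α → ℝ≥0, Measurable K → ∫⁻ x in S, (K x : ℝ≥0∞) ^ p ∂μ.withDensity v ≠ ⊤ →
      (μ.withDensity v) S ^ (1 / p) * ∫⁻ x in S, K x ∂μ ≤
        D * (∫⁻ x in S, (K x : ℝ≥0∞) ^ p ∂μ.withDensity v) ^ (1 / p)) :
    (μ.withDensity v) S ^ (1 / p) * (μ.withDensity σ) S ^ (1 / q) ≤ D := by
  have hq := h.holderConjugate.symm
  have hdual := (h.restrict S).symm.rpow_lintegral_le_of_forall
    (F := fun _ => (μ.withDensity v) S ^ (1 / p)) (D := D) fun K hK hK_top => by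
      rw [← restrict_withDensity hS] at hK_top ⊢
      rw [lintegral_mul_const _ hK.coe_nnreal_ennreal, mul_comm]
      exact hD K hK hK_top
  rwa [← restrict_withDensity hS, setLIntegral_const, ENNReal.mul_rpow_of_nonneg _ _
    hq.one_div_nonneg, one_div q, ENNReal.rpow_rpow_inv hq.ne_zero, ← one_div] at hdual

end DualWeights

section TailMaximal

variable {α : Type*} [LinearOrder α] [MeasurableSpace α] {μ : Measure α} {g : α → ℝ≥0∞}

/-- The maximal function over tails: the supremum of the averages of `g` over the closed tails
`[b, ∞)` that contain `r`. -/
def tailMaximal (μ : Measure α) (g : α → ℝ≥0∞) (r : α) : ℝ≥0∞ :=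
  ⨆ b ≤ r, ⨍⁻ s in Ici b, g s ∂μ

lemma setLAverage_Ici_le_tailMaximal {b r : α} (hbr : b ≤ r) :
    ⨍⁻ s in Ici b, g s ∂μ ≤ tailMaximal μ g r :=
  le_iSup₂ (f := fun b _ => ⨍⁻ s in Ici b, g s ∂μ) b hbr

lemma monotone_tailMaximal (μ : Measure α) (g : α → ℝ≥0∞) : Monotone (tailMaximal μ g) :=
  fun _ _ hrs => iSup₂_le fun _ hb => setLAverage_Ici_le_tailMaximal (hb.trans hrs)

lemma tailMaximal_le_tailMaximal_indicator_add (l : ℝ≥0∞) (r : α) :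
    tailMaximal μ g r ≤ tailMaximal μ ({s | l < g s}.indicator g) r + l := by
  refine iSup₂_le fun b hb => ?_
  have hsplit : ∫⁻ s in Ici b, g s ∂μ ≤
      ∫⁻ s in Ici b, {s | l < g s}.indicator g s ∂μ + l * μ (Ici b) := by
    rw [← setLIntegral_const, ← lintegral_add_right _ measurable_const]
    refine lintegral_mono fun s => ?_
    by_cases hs : l < g s
    · simp [indicator_of_mem (show s ∈ {s | l < g s} from hs)]
    · exact (not_lt.mp hs).trans le_add_self
  calc ⨍⁻ s in Ici b, g s ∂μ
      ≤ ⨍⁻ s in Ici b, {s | l < g s}.indicator g s ∂μ + l * μ (Ici b) / μ (Ici b) := by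
        rw [setLAverage_eq, setLAverage_eq, ← ENNReal.add_div]
        gcongr
    _ ≤ _ := by
        gcongr
        · exact setLAverage_Ici_le_tailMaximal hb
        · exact ENNReal.div_le_of_le_mul le_rfl

/-- The constant in the `L^q` bound for the tail maximal function. -/
def tailMaximalConst (q : ℝ) : ℝ≥0∞ := 2 ^ q * (ENNReal.ofReal q / ENNReal.ofReal (q - 1))

lemma tailMaximalConst_ne_top {q : ℝ} (hq : 1 < q) : tailMaximalConst q ≠ ⊤ := by
  have : ENNReal.ofReal (q - 1) ≠ 0 := by simpa using hq
  exact ENNReal.mul_ne_top (ENNReal.rpow_ne_top_of_nonneg (by linarith) (by simp))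
    (ENNReal.div_ne_top ENNReal.ofReal_ne_top this)

variable [TopologicalSpace α] [OrderTopology α]

section Measurability

variable [BorelSpace α]

lemma measurable_setLIntegral_Ici (μ : Measure α) (g : α → ℝ≥0∞) :
    Measurable fun r => ∫⁻ s in Ici r, g s ∂μ :=
  Antitone.measurable fun _ _ hab => lintegral_mono_set (Ici_subset_Ici.mpr hab)

lemma measurable_measure_Ici (μ : Measure α) : Measurable fun r => μ (Ici r) :=
  Antitone.measurable fun _ _ hab => measure_mono (Ici_subset_Ici.mpr hab)

lemma measurable_setLAverage_Ici (μ : Measure α) (g : α → ℝ≥0∞) :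
    Measurable fun r => ⨍⁻ s in Ici r, g s ∂μ := by
  simp_rw [setLAverage_eq]
  exact (measurable_setLIntegral_Ici μ g).div (measurable_measure_Ici μ)

lemma measurable_tailMaximal (μ : Measure α) (g : α → ℝ≥0∞) : Measurable (tailMaximal μ g) :=
  (monotone_tailMaximal μ g).measurable

end Measurability

variable [SecondCountableTopology α]

lemma measure_eq_iSup_Ici_of_isUpperSet (μ : Measure α) {S : Set α} (hS : IsUpperSet S) :
    μ S = ⨆ s ∈ S, μ (Ici s) := by
  refine le_antisymm ?_ (iSup₂_le fun s hs => measure_mono (hS.Ici_subset hs))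
  by_cases hleast : ∃ a, IsLeast S a
  · obtain ⟨a, ha⟩ := hleast
    exact (measure_mono fun s hs => ha.2 hs).trans (le_iSup₂ (f := fun s _ => μ (Ici s)) a ha.1)
  · obtain ⟨T, hTS, hT, hTU⟩ := TopologicalSpace.isOpen_biUnion_countable S Ioi
      fun _ _ => isOpen_Ioi
    have hcover : S ⊆ ⋃ s ∈ T, Ici s := by
      intro x hx
      obtain ⟨s, hs, hsx⟩ : ∃ s ∈ S, s < x := by
        by_contra! hle
        exact hleast ⟨x, hx, hle⟩
      have hxU : x ∈ ⋃ s ∈ S, Ioi s := mem_biUnion hs hsx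
      rw [← hTU] at hxU
      exact biUnion_mono subset_rfl (fun _ _ => Ioi_subset_Ici_self) hxU
    have hdir : DirectedOn (Function.onFun (· ⊆ ·) Ici) T := fun a ha b hb =>
      ⟨min a b, min_rec' (· ∈ T) ha hb, Ici_subset_Ici.mpr (min_le_left a b),
        Ici_subset_Ici.mpr (min_le_right a b)⟩
    calc μ S ≤ μ (⋃ s ∈ T, Ici s) := measure_mono hcover
      _ = ⨆ s ∈ T, μ (Ici s) := measure_biUnion_eq_iSup hT hdir
      _ ≤ ⨆ s ∈ S, μ (Ici s) := biSup_mono hTS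

-- Tails are nested, so no covering argument is needed: the level set is a directed union of tails
-- and each of them lies in a tail over which the average of `g` exceeds `l`.
lemma mul_meas_lt_tailMaximal_le (l : ℝ≥0∞) :
    l * μ {r | l < tailMaximal μ g r} ≤ ∫⁻ s, g s ∂μ := by
  have hupper : IsUpperSet {r | l < tailMaximal μ g r} :=
    fun _ _ hrs hr => lt_of_lt_of_le hr (monotone_tailMaximal μ g hrs)
  simp_rw [measure_eq_iSup_Ici_of_isUpperSet μ hupper, ENNReal.mul_iSup]
  refine iSup₂_le fun r hr => ?_
  obtain ⟨b, hbr, hb⟩ : ∃ b, ∃ _ : b ≤ r, l < ⨍⁻ s in Ici b, g s ∂μ := by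
    simpa only [mem_ofPred_eq, tailMaximal, lt_iSup_iff] using hr
  rw [setLAverage_eq] at hb
  calc l * μ (Ici r) ≤ l * μ (Ici b) := by gcongr
    _ ≤ ∫⁻ s in Ici b, g s ∂μ := ENNReal.mul_le_of_le_div hb.le
    _ ≤ ∫⁻ s, g s ∂μ := setLIntegral_le_lintegral _ _

lemma mul_meas_lt_tailMaximal_div_two_le (hg : Measurable g) {l : ℝ≥0∞} (hl : l ≠ ⊤) :
    l * μ {r | l < tailMaximal μ g r / 2} ≤ ∫⁻ s in {s | l < g s}, g s ∂μ := by
  have hsub : {r | l < tailMaximal μ g r / 2} ⊆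
      {r | l < tailMaximal μ ({s | l < g s}.indicator g) r} := fun r hr => by
    have h2 : l + l < tailMaximal μ g r := by
      rwa [← mul_two, ← ENNReal.lt_div_iff_mul_lt (by simp) (by simp)]
    exact (ENNReal.add_lt_add_iff_right hl).mp
      (h2.trans_le (tailMaximal_le_tailMaximal_indicator_add l r))
  calc l * μ {r | l < tailMaximal μ g r / 2}
      ≤ l * μ {r | l < tailMaximal μ ({s | l < g s}.indicator g) r} := by gcongr
    _ ≤ ∫⁻ s, {s | l < g s}.indicator g s ∂μ := mul_meas_lt_tailMaximal_le l
    _ = ∫⁻ s in {s | l < g s}, g s ∂μ :=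
        lintegral_indicator (measurableSet_lt measurable_const hg) g

lemma lintegral_tailMaximal_rpow_le [BorelSpace α] {q : ℝ} (hq : 1 < q) (hg : Measurable g) :
    ∫⁻ r, tailMaximal μ g r ^ q ∂μ ≤ tailMaximalConst q * ∫⁻ r, g r ^ q ∂μ := by
  have hq0 : 0 < q := zero_lt_one.trans hq
  have hM : Measurable (tailMaximal μ g) := measurable_tailMaximal μ g
  have hq1 : ENNReal.ofReal (q - 1) ≠ 0 := by simpa using hq
  let X := ∫⁻ l in Ioi (0 : ℝ),
    (μ.withDensity g) {s | ENNReal.ofReal l < g s} * ENNReal.ofReal (l ^ (q - 1 - 1))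
  have hgX : ∫⁻ r, g r ^ q ∂μ = ENNReal.ofReal (q - 1) * X := by
    rw [← lintegral_rpow_eq_lintegral_meas_ofReal_lt_mul (sub_pos.mpr hq) hg.aemeasurable,
      lintegral_withDensity_eq_lintegral_mul _ hg (by fun_prop)]
    exact lintegral_congr fun r => (rpow_eq_rpow_sub_one_mul hq.le _).trans (mul_comm _ _)
  have hlevel {l : ℝ} (hl : 0 < l) :
      μ {r | ENNReal.ofReal l < tailMaximal μ g r / 2} * ENNReal.ofReal (l ^ (q - 1)) ≤
        (μ.withDensity g) {s | ENNReal.ofReal l < g s} * ENNReal.ofReal (l ^ (q - 1 - 1)) := by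
    have hpow : l ^ (q - 1) = l * l ^ (q - 1 - 1) := by
      rw [Real.rpow_sub_one hl.ne' (q - 1), mul_div_cancel₀ _ hl.ne']
    rw [hpow, ENNReal.ofReal_mul hl.le, ← mul_assoc, mul_comm (μ _),
      withDensity_apply _ (measurableSet_lt measurable_const hg)]
    gcongr
    exact mul_meas_lt_tailMaximal_div_two_le hg ENNReal.ofReal_ne_top
  calc ∫⁻ r, tailMaximal μ g r ^ q ∂μ
      = 2 ^ q * ∫⁻ r, (tailMaximal μ g r / 2) ^ q ∂μ := by
        rw [← lintegral_const_mul _ (by fun_prop)]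
        refine lintegral_congr fun r => ?_
        rw [← ENNReal.mul_rpow_of_nonneg _ _ hq0.le, ENNReal.mul_div_cancel (by simp) (by simp)]
    _ ≤ 2 ^ q * (ENNReal.ofReal q * X) := by
        rw [lintegral_rpow_eq_lintegral_meas_ofReal_lt_mul hq0 (by fun_prop)]
        gcongr 2 ^ q * (ENNReal.ofReal q * ?_)
        exact setLIntegral_mono' measurableSet_Ioi fun l hl => hlevel hl
    _ = tailMaximalConst q * ∫⁻ r, g r ^ q ∂μ := by
        rw [hgX, tailMaximalConst, mul_assoc, ← mul_assoc (_ / _),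
          ENNReal.div_mul_cancel hq1 ENNReal.ofReal_ne_top]

end TailMaximal

section TailMuckenhoupt

variable {α : Type*} [LinearOrder α] [MeasurableSpace α] {p q : ℝ} {μ : Measure α}
  {v σ : α → ℝ≥0∞} {A : ℝ≥0∞}

/-- The two-weight Muckenhoupt condition over closed tails, with constant `A`. -/
def IsTailMuckenhoupt (p q : ℝ) (μ : Measure α) (v σ : α → ℝ≥0∞) (A : ℝ≥0∞) : Prop :=
  ∀ b, (μ.withDensity v) (Ici b) ^ (1 / p) * (μ.withDensity σ) (Ici b) ^ (1 / q) ≤ A * μ (Ici b)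

namespace IsTailMuckenhoupt

lemma symm (hA : IsTailMuckenhoupt p q μ v σ A) : IsTailMuckenhoupt q p μ σ v A :=
  fun b => (mul_comm _ _).trans_le (hA b)

lemma mul_div_rpow_le (hA : IsTailMuckenhoupt p q μ v σ A) (hpq : p.HolderConjugate q) (b : α) :
    (μ.withDensity v) (Ici b) * ((μ.withDensity σ) (Ici b) / μ (Ici b)) ^ (p - 1) ≤
      A ^ p * μ (Ici b) := by
  have hpow : (μ.withDensity v) (Ici b) * (μ.withDensity σ) (Ici b) ^ (p - 1) ≤
      A ^ p * μ (Ici b) * μ (Ici b) ^ (p - 1) := by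
    have := ENNReal.rpow_le_rpow (hA b) hpq.nonneg
    rwa [ENNReal.mul_rpow_of_nonneg _ _ hpq.nonneg, ENNReal.mul_rpow_of_nonneg _ _ hpq.nonneg,
      ← ENNReal.rpow_mul, ← ENNReal.rpow_mul, one_div_mul_cancel hpq.ne_zero, ENNReal.rpow_one,
      one_div_mul_eq_div, hpq.div_conj_eq_sub_one,
      rpow_eq_rpow_sub_one_mul hpq.lt.le (μ (Ici b)), mul_comm (_ ^ (p - 1)), ← mul_assoc] at this
  rw [ENNReal.div_rpow_of_nonneg _ _ hpq.sub_one_pos.le, ← mul_div_assoc]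
  exact ENNReal.div_le_of_le_mul hpow

lemma withDensity_right_Ici_ne_top (hA : IsTailMuckenhoupt p q μ v σ A) (hA_top : A ≠ ⊤)
    (h : IsDualWeightPair p q μ v σ) {b : α} (h0 : μ (Ici b) ≠ 0) (htop : μ (Ici b) ≠ ⊤) :
    (μ.withDensity σ) (Ici b) ≠ ⊤ := by
  intro hσ
  have hv : (μ.withDensity v) (Ici b) ^ (1 / p) ≠ 0 := by
    rw [Ne, ENNReal.rpow_eq_zero_iff_of_pos h.holderConjugate.one_div_pos]
    exact h.withDensity_left_ne_zero h0
  refine (ENNReal.mul_lt_top hA_top.lt_top htop.lt_top).not_ge (le_of_eq_of_le ?_ (hA b))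
  rw [hσ, ENNReal.top_rpow_of_pos h.holderConjugate.symm.one_div_pos, ENNReal.mul_top hv]

variable [TopologicalSpace α] [OrderTopology α] [BorelSpace α]

-- Lerner's pointwise form of the `A_p` condition: it bounds `tailMaximal μ g` by maximal functions
-- with respect to the measures `σμ` and `vμ` themselves, for which the bounds are unweighted.
lemma setLAverage_Ici_rpow_le [IsFiniteMeasure μ] (hA : IsTailMuckenhoupt p q μ v σ A)
    (hA_top : A ≠ ⊤) (h : IsDualWeightPair p q μ v σ) {g : α → ℝ≥0∞} (hg : Measurable g) (b : α) :
    (⨍⁻ s in Ici b, g s ∂μ) ^ (p - 1) ≤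
      A ^ p * ⨍⁻ s in Ici b,
        tailMaximal (μ.withDensity σ) (fun s => g s / σ s) s ^ (p - 1) / v s
          ∂μ.withDensity v := by
  have hp1 := h.holderConjugate.sub_one_pos
  have hμ_top := measure_ne_top μ (Ici b)
  rcases eq_or_ne (μ (Ici b)) 0 with hμ | hμ
  · simp [Measure.restrict_eq_zero.mpr hμ, hp1]
  set N := tailMaximal (μ.withDensity σ) fun s => g s / σ s
  have hN : Measurable N := measurable_tailMaximal _ _
  have hV0 := h.withDensity_left_ne_zero hμ
  have hS0 := h.symm.withDensity_left_ne_zero hμ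
  have hV_top := hA.symm.withDensity_right_Ici_ne_top hA_top h.symm hμ hμ_top
  have hS_top := hA.withDensity_right_Ici_ne_top hA_top h hμ hμ_top
  set V := (μ.withDensity v) (Ici b)
  set S := (μ.withDensity σ) (Ici b)
  let J := ⨍⁻ s in Ici b, g s / σ s ∂μ.withDensity σ
  have hJ : ⨍⁻ s in Ici b, g s ∂μ = J * (S / μ (Ici b)) := by
    rw [setLAverage_eq, ← h.symm.setLIntegral_div hg measurableSet_Ici, ← mul_div_assoc]
    simp only [J, setLAverage_eq]
    rw [ENNReal.div_mul_cancel hS0 hS_top]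
  have hJN : J ^ (p - 1) * μ (Ici b) ≤
      ∫⁻ s in Ici b, N s ^ (p - 1) / v s ∂μ.withDensity v := by
    rw [h.setLIntegral_div (by fun_prop) measurableSet_Ici, ← setLIntegral_const]
    refine setLIntegral_mono' measurableSet_Ici fun s hs => ?_
    exact ENNReal.rpow_le_rpow (setLAverage_Ici_le_tailMaximal hs) hp1.le
  rw [setLAverage_eq (μ := μ.withDensity v), ← mul_div_assoc,
    ENNReal.le_div_iff_mul_le (.inl hV0) (.inl hV_top)]
  calc (⨍⁻ s in Ici b, g s ∂μ) ^ (p - 1) * V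
      = J ^ (p - 1) * (V * (S / μ (Ici b)) ^ (p - 1)) := by
        rw [hJ, ENNReal.mul_rpow_of_nonneg _ _ hp1.le, mul_assoc, mul_comm V]
    _ ≤ J ^ (p - 1) * (A ^ p * μ (Ici b)) := by
        gcongr J ^ (p - 1) * ?_
        exact hA.mul_div_rpow_le h.holderConjugate b
    _ = A ^ p * (J ^ (p - 1) * μ (Ici b)) := mul_left_comm _ _ _
    _ ≤ _ := by gcongr

variable [SecondCountableTopology α]

lemma exists_lintegral_tailMaximal_rpow_le [IsFiniteMeasure μ]
    (hA : IsTailMuckenhoupt p q μ v σ A) (hA_top : A ≠ ⊤) (h : IsDualWeightPair p q μ v σ) :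
    ∃ C ≠ ⊤, ∀ g, Measurable g →
      ∫⁻ r, tailMaximal μ g r ^ p ∂μ.withDensity v ≤ C * ∫⁻ r, g r ^ p ∂μ.withDensity v := by
  have hpq := h.holderConjugate
  have hv := h.measurable_left
  have hσ := h.measurable_right
  refine ⟨(A ^ p) ^ q * (tailMaximalConst q * tailMaximalConst p), ENNReal.mul_ne_top
    (ENNReal.rpow_ne_top_of_nonneg hpq.symm.nonneg
      (ENNReal.rpow_ne_top_of_nonneg hpq.nonneg hA_top))
    (ENNReal.mul_ne_top (tailMaximalConst_ne_top hpq.symm.lt) (tailMaximalConst_ne_top hpq.lt)),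
    fun g hg => ?_⟩
  let N := tailMaximal (μ.withDensity σ) fun s => g s / σ s
  have hN : Measurable N := measurable_tailMaximal _ _
  let k (s : α) : ℝ≥0∞ := N s ^ (p - 1) / v s
  have hM : Measurable (tailMaximal (μ.withDensity v) k) := measurable_tailMaximal _ _
  have hpt (r : α) : tailMaximal μ g r ^ p ≤
      (A ^ p) ^ q * tailMaximal (μ.withDensity v) k r ^ q := by
    rw [← hpq.sub_one_mul_conj, ENNReal.rpow_mul, ← ENNReal.mul_rpow_of_nonneg _ _ hpq.symm.nonneg,
      hpq.sub_one_mul_conj]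
    refine ENNReal.rpow_le_rpow ?_ hpq.symm.nonneg
    rw [← ENNReal.le_rpow_inv_iff hpq.sub_one_pos]
    refine iSup₂_le fun b hb => ?_
    rw [ENNReal.le_rpow_inv_iff hpq.sub_one_pos]
    refine (hA.setLAverage_Ici_rpow_le hA_top h hg b).trans ?_
    gcongr
    exact setLAverage_Ici_le_tailMaximal hb
  calc ∫⁻ r, tailMaximal μ g r ^ p ∂μ.withDensity v
      ≤ (A ^ p) ^ q * ∫⁻ r, tailMaximal (μ.withDensity v) k r ^ q ∂μ.withDensity v := by
        rw [← lintegral_const_mul _ (by fun_prop)]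
        exact lintegral_mono hpt
    _ ≤ (A ^ p) ^ q * (tailMaximalConst q * ∫⁻ r, k r ^ q ∂μ.withDensity v) := by
        gcongr
        exact lintegral_tailMaximal_rpow_le hpq.symm.lt (by fun_prop)
    _ = (A ^ p) ^ q * (tailMaximalConst q * ∫⁻ r, N r ^ p ∂μ.withDensity σ) := by
        rw [h.lintegral_div_rpow (by fun_prop)]
        simp only [← ENNReal.rpow_mul, hpq.sub_one_mul_conj]
    _ ≤ (A ^ p) ^ q * (tailMaximalConst q *
          (tailMaximalConst p * ∫⁻ r, (g r / σ r) ^ p ∂μ.withDensity σ)) := by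
        gcongr
        exact lintegral_tailMaximal_rpow_le hpq.lt (by fun_prop)
    _ = _ := by
        rw [h.symm.lintegral_div_rpow hg]
        simp only [mul_assoc]

end IsTailMuckenhoupt

end TailMuckenhoupt

section TailAverageAdjoint

variable {α : Type*} [LinearOrder α] [MeasurableSpace α]

/-- The formal adjoint of the tail average `r ↦ ⨍⁻ s in Ici r, g s ∂μ` with respect to `μ`. -/
def tailAverageAdjoint (μ : Measure α) (g : α → ℝ≥0∞) (r : α) : ℝ≥0∞ :=
  ∫⁻ s in Iic r, g s / μ (Ici s) ∂μ

variable [TopologicalSpace α] [OrderTopology α] [BorelSpace α] [SecondCountableTopology α]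

lemma lintegral_mul_tailAverageAdjoint (μ : Measure α) [SFinite μ] {g K : α → ℝ≥0∞}
    (hg : Measurable g) (hK : Measurable K) :
    ∫⁻ r, K r * tailAverageAdjoint μ g r ∂μ = ∫⁻ s, g s * (⨍⁻ r in Ici s, K r ∂μ) ∂μ := by
  have hgW : Measurable fun s => g s / μ (Ici s) := hg.div (measurable_measure_Ici μ)
  have hE : MeasurableSet {z : α × α | z.2 ≤ z.1} := measurableSet_le measurable_snd measurable_fst
  let F (r s : α) : ℝ≥0∞ :=
    {z : α × α | z.2 ≤ z.1}.indicator (fun z => K z.1 * (g z.2 / μ (Ici z.2))) (r, s)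
  have hF : Measurable (Function.uncurry F) :=
    ((hK.comp measurable_fst).mul (hgW.comp measurable_snd)).indicator hE
  calc ∫⁻ r, K r * tailAverageAdjoint μ g r ∂μ
      = ∫⁻ r, ∫⁻ s, F r s ∂μ ∂μ := by
        refine lintegral_congr fun r => ?_
        rw [tailAverageAdjoint, ← lintegral_const_mul _ hgW,
          ← lintegral_indicator measurableSet_Iic]
        rfl
    _ = ∫⁻ s, ∫⁻ r, F r s ∂μ ∂μ := lintegral_lintegral_swap hF.aemeasurable
    _ = ∫⁻ s, g s * (⨍⁻ r in Ici s, K r ∂μ) ∂μ := by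
        refine lintegral_congr fun s => ?_
        rw [setLAverage_eq, ← mul_div_assoc, mul_comm, mul_div_assoc,
          ← lintegral_mul_const _ hK, ← lintegral_indicator measurableSet_Ici]
        rfl

namespace IsTailMuckenhoupt

variable {p q : ℝ} {μ : Measure α} [IsFiniteMeasure μ] {v σ : α → ℝ≥0∞} {A : ℝ≥0∞}

lemma exists_lintegral_tailAverageAdjoint_rpow_le (hA : IsTailMuckenhoupt p q μ v σ A)
    (hA_top : A ≠ ⊤) (h : IsDualWeightPair p q μ v σ) :
    ∃ C ≠ ⊤, ∀ g, Measurable g → ∫⁻ r, tailAverageAdjoint μ g r ^ p ∂μ.withDensity v ≤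
      C * ∫⁻ r, g r ^ p ∂μ.withDensity v := by
  have hpq := h.holderConjugate
  obtain ⟨B, hB, hmax⟩ := hA.symm.exists_lintegral_tailMaximal_rpow_le hA_top h.symm
  refine ⟨(B ^ (1 / q)) ^ p, ENNReal.rpow_ne_top_of_nonneg hpq.nonneg
    (ENNReal.rpow_ne_top_of_nonneg hpq.symm.one_div_nonneg hB), fun g hg => ?_⟩
  have hdual : (∫⁻ r, tailAverageAdjoint μ g r ^ p ∂μ.withDensity v) ^ (1 / p) ≤
      B ^ (1 / q) * (∫⁻ r, g r ^ p ∂μ.withDensity v) ^ (1 / p) := by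
    refine h.rpow_lintegral_le_of_forall fun K hK _ => ?_
    have havg : ∫⁻ s, (⨍⁻ r in Ici s, (K r : ℝ≥0∞) ∂μ) ^ q ∂μ.withDensity σ ≤
        B * ∫⁻ r, (K r : ℝ≥0∞) ^ q ∂μ.withDensity σ :=
      (lintegral_mono fun s => ENNReal.rpow_le_rpow (setLAverage_Ici_le_tailMaximal le_rfl)
        hpq.symm.nonneg).trans
        (hmax _ (by fun_prop))
    calc ∫⁻ r, K r * tailAverageAdjoint μ g r ∂μ
        = ∫⁻ s, g s * (⨍⁻ r in Ici s, (K r : ℝ≥0∞) ∂μ) ∂μ :=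
          lintegral_mul_tailAverageAdjoint μ hg (by fun_prop)
      _ ≤ (∫⁻ r, g r ^ p ∂μ.withDensity v) ^ (1 / p) *
            (∫⁻ s, (⨍⁻ r in Ici s, (K r : ℝ≥0∞) ∂μ) ^ q ∂μ.withDensity σ) ^ (1 / q) :=
          h.lintegral_mul_le_Lp_mul_Lq hg (measurable_setLAverage_Ici μ _)
      _ ≤ (∫⁻ r, g r ^ p ∂μ.withDensity v) ^ (1 / p) *
            (B * ∫⁻ r, (K r : ℝ≥0∞) ^ q ∂μ.withDensity σ) ^ (1 / q) := by
          gcongr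
          exact hpq.symm.one_div_nonneg
      _ = _ := by
          rw [ENNReal.mul_rpow_of_nonneg _ _ hpq.symm.one_div_nonneg]
          ring
  rw [one_div p, ENNReal.rpow_inv_le_iff hpq.pos, ENNReal.mul_rpow_of_nonneg _ _ hpq.nonneg,
    ENNReal.rpow_inv_rpow hpq.ne_zero] at hdual
  exact hdual

lemma exists_lintegral_setLAverage_add_tailAverageAdjoint_rpow_le
    (hA : IsTailMuckenhoupt p q μ v σ A) (hA_top : A ≠ ⊤) (h : IsDualWeightPair p q μ v σ) :
    ∃ C ≠ ⊤, ∀ g, Measurable g →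
      ∫⁻ r, (⨍⁻ s in Ici r, g s ∂μ + tailAverageAdjoint μ g r) ^ p ∂μ.withDensity v ≤
        C * ∫⁻ r, g r ^ p ∂μ.withDensity v := by
  have hp := h.holderConjugate
  obtain ⟨C, hC, hadj⟩ := hA.exists_lintegral_tailAverageAdjoint_rpow_le hA_top h
  obtain ⟨B, hB, hmax⟩ := hA.exists_lintegral_tailMaximal_rpow_le hA_top h
  refine ⟨2 ^ (p - 1) * (B + C), ENNReal.mul_ne_top (by simp) (by finiteness), fun g hg => ?_⟩
  calc ∫⁻ r, (⨍⁻ s in Ici r, g s ∂μ + tailAverageAdjoint μ g r) ^ p ∂μ.withDensity v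
      ≤ ∫⁻ r, 2 ^ (p - 1) * (tailMaximal μ g r ^ p + tailAverageAdjoint μ g r ^ p)
          ∂μ.withDensity v := by
        refine lintegral_mono fun r => ?_
        refine (ENNReal.rpow_add_le_mul_rpow_add_rpow _ _ hp.lt.le).trans ?_
        gcongr
        exacts [hp.nonneg, setLAverage_Ici_le_tailMaximal le_rfl]
    _ = 2 ^ (p - 1) * (∫⁻ r, tailMaximal μ g r ^ p ∂μ.withDensity v +
          ∫⁻ r, tailAverageAdjoint μ g r ^ p ∂μ.withDensity v) := by
        rw [lintegral_const_mul' _ _ (by simp),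
          lintegral_add_left ((measurable_tailMaximal μ g).pow_const p)]
    _ ≤ 2 ^ (p - 1) * (B * ∫⁻ r, g r ^ p ∂μ.withDensity v +
          C * ∫⁻ r, g r ^ p ∂μ.withDensity v) := by
        gcongr
        · exact hmax g hg
        · exact hadj g hg
    _ = _ := by ring

end IsTailMuckenhoupt

end TailAverageAdjoint

namespace IsRadialWeight

variable {w : ℝ → ℝ} (hw : IsRadialWeight w)
include hw

lemma aemeasurable : AEMeasurable w (volume.restrict (Ioo 0 1)) :=
  (hw.2.1.mono_set Ioo_subset_Ico_self).aemeasurable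

lemma mul_nonneg {s : ℝ} (hs : 0 ≤ s) (hs1 : s < 1) : 0 ≤ s * w s :=
  _root_.mul_nonneg hs (hw.1 s ⟨hs, hs1⟩)

lemma ae_mul_nonneg {r : ℝ} (hr : 0 ≤ r) : 0 ≤ᵐ[volume.restrict (Ioo r 1)] fun s => s * w s :=
  (ae_restrict_mem measurableSet_Ioo).mono fun _ hs => hw.mul_nonneg (hr.trans hs.1.le) hs.2

lemma integrableOn_mul {r : ℝ} (hr : 0 ≤ r) : IntegrableOn (fun s => s * w s) (Ioo r 1) := by
  have hint : IntegrableOn w (Ioo r 1) :=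
    hw.2.1.mono_set (Ioo_subset_Ico_self.trans (Ico_subset_Ico_left hr))
  refine hint.bdd_mul (c := 1) (by fun_prop) ?_
  filter_upwards [ae_restrict_mem measurableSet_Ioo] with s hs
  rw [Real.norm_of_nonneg (hr.trans hs.1.le)]
  exact hs.2.le

lemma hat1_nonneg {r : ℝ} (hr : 0 ≤ r) : 0 ≤ hat1 w r :=
  integral_nonneg_of_ae (hw.ae_mul_nonneg hr)

lemma hat1_pos {r : ℝ} (hr : 0 ≤ r) (hr1 : r < 1) : 0 < hat1 w r := by
  refine (hw.hat1_nonneg hr).lt_of_ne fun h => (hw.2.2 r ⟨hr, hr1⟩).ne' ?_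
  refine integral_eq_zero_of_ae ?_
  filter_upwards [(setIntegral_eq_zero_iff_of_nonneg_ae (hw.ae_mul_nonneg hr)
    (hw.integrableOn_mul hr)).mp h.symm, ae_restrict_mem measurableSet_Ioo] with s hs hsr
  exact (mul_eq_zero.mp hs).resolve_left (hr.trans_lt hsr.1).ne'

lemma hat1_anti {r s : ℝ} (hr : 0 ≤ r) (hrs : r ≤ s) : hat1 w s ≤ hat1 w r :=
  setIntegral_mono_set (hw.integrableOn_mul hr) (hw.ae_mul_nonneg hr)
    (Ioo_subset_Ioo_left hrs).eventuallyLE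

end IsRadialWeight

section RadialMeasure

/-- The measure `s φ(s) ds` on `(0, 1)`, which is the radial part of `φ(|z|) dx dy` in polar
coordinates; for a radial weight `ω` its tails are `ω̂₁`. -/
def radialMeasure (φ : ℝ → ℝ) : Measure ℝ :=
  (volume.restrict (Ioo 0 1)).withDensity fun s => ENNReal.ofReal (s * φ s)

variable {φ : ℝ → ℝ}

lemma ae_radialMeasure_of_forall_mem {P : ℝ → Prop} (h : ∀ s ∈ Ioo (0 : ℝ) 1, P s) :
    ∀ᵐ s ∂radialMeasure φ, P s :=
  (withDensity_absolutelyContinuous _ _).ae_le ((ae_restrict_mem measurableSet_Ioo).mono h)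

lemma aemeasurable_ofReal_mul (hφ : AEMeasurable φ (volume.restrict (Ioo 0 1))) :
    AEMeasurable (fun s => ENNReal.ofReal (s * φ s)) (volume.restrict (Ioo 0 1)) :=
  (measurable_id.aemeasurable.mul hφ).ennreal_ofReal

lemma setLIntegral_radialMeasure (hφ : AEMeasurable φ (volume.restrict (Ioo 0 1)))
    (g : ℝ → ℝ≥0∞) {S : Set ℝ} (hS : MeasurableSet S) :
    ∫⁻ s in S, g s ∂radialMeasure φ =
      ∫⁻ s in S ∩ Ioo 0 1, ENNReal.ofReal (s * φ s) * g s := by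
  have hmeas : AEMeasurable (fun s => ENNReal.ofReal (s * φ s))
      (volume.restrict (S ∩ Ioo 0 1)) :=
    (aemeasurable_ofReal_mul hφ).mono_measure
      (Measure.restrict_mono inter_subset_right le_rfl)
  rw [radialMeasure, restrict_withDensity hS, Measure.restrict_restrict hS,
    lintegral_withDensity_eq_lintegral_mul_non_measurable₀ _ hmeas
      (.of_forall fun _ => ENNReal.ofReal_lt_top)]
  rfl

lemma lintegral_radialMeasure (hφ : AEMeasurable φ (volume.restrict (Ioo 0 1)))
    (g : ℝ → ℝ≥0∞) :
    ∫⁻ s, g s ∂radialMeasure φ = ∫⁻ s in Ioo 0 1, ENNReal.ofReal (s * φ s) * g s := by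
  rw [← setLIntegral_univ, setLIntegral_radialMeasure hφ g .univ, univ_inter]

lemma setLIntegral_Ici_radialMeasure (hφ : AEMeasurable φ (volume.restrict (Ioo 0 1)))
    (g : ℝ → ℝ≥0∞) {b : ℝ} (hb : 0 ≤ b) :
    ∫⁻ s in Ici b, g s ∂radialMeasure φ = ∫⁻ s in Ioo b 1, ENNReal.ofReal (s * φ s) * g s := by
  have hsub : Ioo b 1 ⊆ Ici b ∩ Ioo 0 1 := fun s hs => ⟨hs.1.le, hb.trans_lt hs.1, hs.2⟩
  have hsup : Ici b ∩ Ioo 0 1 ⊆ Ico b 1 := fun s hs => ⟨hs.1, hs.2.2⟩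
  rw [setLIntegral_radialMeasure hφ g measurableSet_Ici]
  exact setLIntegral_congr
    ((hsup.eventuallyLE.trans Ioo_ae_eq_Ico.symm.le).antisymm hsub.eventuallyLE)

lemma setLIntegral_Iic_radialMeasure (hφ : AEMeasurable φ (volume.restrict (Ioo 0 1)))
    (g : ℝ → ℝ≥0∞) {r : ℝ} (hr : r < 1) :
    ∫⁻ s in Iic r, g s ∂radialMeasure φ = ∫⁻ s in Ioo 0 r, ENNReal.ofReal (s * φ s) * g s := by
  have hset : Iic r ∩ Ioo 0 1 = Ioc 0 r := by
    ext s
    simp only [mem_inter_iff, mem_Iic, mem_Ioo, mem_Ioc]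
    exact ⟨fun h => ⟨h.2.1, h.1⟩, fun h => ⟨h.2, h.1, h.2.trans_lt hr⟩⟩
  rw [setLIntegral_radialMeasure hφ g measurableSet_Iic, hset, restrict_Ioo_eq_restrict_Ioc]

lemma radialMeasure_Ici (hφ : AEMeasurable φ (volume.restrict (Ioo 0 1))) {b : ℝ}
    (hb : 0 ≤ b) : radialMeasure φ (Ici b) = ∫⁻ s in Ioo b 1, ENNReal.ofReal (s * φ s) := by
  simpa using setLIntegral_Ici_radialMeasure hφ 1 hb

lemma Ici_ae_eq_Ici_zero_radialMeasure {b : ℝ} (hb : b ≤ 0) :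
    (Ici b : Set ℝ) =ᵐ[radialMeasure φ] Ici 0 :=
  ae_radialMeasure_of_forall_mem fun _ hs =>
    propext ⟨fun _ => hs.1.le, fun _ => hb.trans hs.1.le⟩

lemma Ici_ae_eq_empty_radialMeasure {b : ℝ} (hb : 1 ≤ b) :
    (Ici b : Set ℝ) =ᵐ[radialMeasure φ] (∅ : Set ℝ) :=
  ae_radialMeasure_of_forall_mem fun _ hs =>
    propext ⟨fun h => (hs.2.trans_le (hb.trans h)).false, False.elim⟩

lemma isTailMuckenhoupt_radialMeasure_iff {p q : ℝ} (hpq : p.HolderConjugate q)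
    {v σ : ℝ → ℝ≥0∞} {A : ℝ≥0∞} :
    IsTailMuckenhoupt p q (radialMeasure φ) v σ A ↔
      ∀ b ∈ Ico (0 : ℝ) 1, (radialMeasure φ).withDensity v (Ici b) ^ (1 / p) *
        (radialMeasure φ).withDensity σ (Ici b) ^ (1 / q) ≤ A * radialMeasure φ (Ici b) := by
  refine ⟨fun h b _ => h b, fun h b => ?_⟩
  have hv := withDensity_absolutelyContinuous (radialMeasure φ) v
  have hσ := withDensity_absolutelyContinuous (radialMeasure φ) σ
  rcases le_or_gt b 0 with hb | hb
  · have hIci := Ici_ae_eq_Ici_zero_radialMeasure (φ := φ) hb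
    rw [measure_congr hIci, measure_congr (hv.ae_le hIci), measure_congr (hσ.ae_le hIci)]
    exact h 0 (left_mem_Ico.mpr one_pos)
  rcases lt_or_ge b 1 with hb1 | hb1
  · exact h b ⟨hb.le, hb1⟩
  · rw [measure_congr (hv.ae_le (Ici_ae_eq_empty_radialMeasure hb1)), measure_empty,
      ENNReal.zero_rpow_of_pos hpq.one_div_pos, zero_mul]
    exact zero_le

lemma withDensity_radialMeasure {w u : ℝ → ℝ} (hw : IsRadialWeight w) (hu : Measurable u) :
    (radialMeasure w).withDensity (fun s => ENNReal.ofReal (u s)) =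
      radialMeasure fun s => w s * u s := by
  rw [radialMeasure, ← withDensity_mul₀ (aemeasurable_ofReal_mul hw.aemeasurable)
    hu.ennreal_ofReal.aemeasurable, radialMeasure]
  refine withDensity_congr_ae ((ae_restrict_mem measurableSet_Ioo).mono fun s hs => ?_)
  rw [Pi.mul_apply, ← ENNReal.ofReal_mul (hw.mul_nonneg hs.1.le hs.2), mul_assoc]

namespace IsRadialWeight

variable {w : ℝ → ℝ} (hw : IsRadialWeight w)
include hw

lemma radialMeasure_Ici {b : ℝ} (hb : 0 ≤ b) :
    radialMeasure w (Ici b) = ENNReal.ofReal (hat1 w b) := by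
  rw [_root_.radialMeasure_Ici hw.aemeasurable hb, hat1,
    ofReal_integral_eq_lintegral_ofReal (hw.integrableOn_mul hb) (hw.ae_mul_nonneg hb)]

lemma isFiniteMeasure_radialMeasure : IsFiniteMeasure (radialMeasure w) :=
  isFiniteMeasure_withDensity_ofReal (hw.integrableOn_mul le_rfl).2

lemma aemeasurable_mul {v : ℝ → ℝ} (hv : Measurable v) :
    AEMeasurable (fun s => w s * v s) (volume.restrict (Ioo 0 1)) :=
  hw.aemeasurable.mul hv.aemeasurable

lemma withDensity_radialMeasure_Ici {v : ℝ → ℝ} (hv : Measurable v) {b : ℝ} (hb : 0 ≤ b) :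
    (radialMeasure w).withDensity (fun s => ENNReal.ofReal (v s)) (Ici b) =
      ∫⁻ s in Ioo b 1, ENNReal.ofReal (s * w s * v s) := by
  simp only [withDensity_radialMeasure hw hv,
    _root_.radialMeasure_Ici (hw.aemeasurable_mul hv) hb, mul_assoc]

end IsRadialWeight

end RadialMeasure

section Muckenhoupt

variable {p : ℝ} (hp : 1 < p) {w v : ℝ → ℝ} (hv : Measurable v)
include hp hv

lemma isDualWeightPair_radialMeasure (hv_pos : ∀ s ∈ Ico (0 : ℝ) 1, 0 < v s) :
    IsDualWeightPair p (p / (p - 1)) (radialMeasure w) (fun s => ENNReal.ofReal (v s))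
      (fun s => ENNReal.ofReal (v s ^ (-(p / (p - 1)) / p))) where
  holderConjugate := .conjExponent hp
  measurable_left := hv.ennreal_ofReal
  measurable_right := (hv.pow_const _).ennreal_ofReal
  rpow_mul_rpow_eq_one := ae_radialMeasure_of_forall_mem fun s hs => by
    have hvs := hv_pos s (Ioo_subset_Ico_self hs)
    have hexp : 1 / p + -(p / (p - 1)) / p * (1 / (p / (p - 1))) = 0 := by
      have : p ≠ 0 := by positivity
      have : p - 1 ≠ 0 := sub_ne_zero.mpr hp.ne'
      field_simp
      ring
    rw [ENNReal.ofReal_rpow_of_pos hvs,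
      ENNReal.ofReal_rpow_of_pos (Real.rpow_pos_of_pos hvs _), ← Real.rpow_mul hvs.le,
      ← ENNReal.ofReal_mul (by positivity), ← Real.rpow_add hvs, hexp, Real.rpow_zero,
      ENNReal.ofReal_one]

lemma Ap2_le_iff_isTailMuckenhoupt (hw : IsRadialWeight w) {A : ℝ≥0∞} :
    Ap2 p w v ≤ A ↔
      IsTailMuckenhoupt p (p / (p - 1)) (radialMeasure w) (fun s => ENNReal.ofReal (v s))
        (fun s => ENNReal.ofReal (v s ^ (-(p / (p - 1)) / p))) A := by
  have hpq : p.HolderConjugate (p / (p - 1)) := .conjExponent hp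
  rw [isTailMuckenhoupt_radialMeasure_iff hpq, Ap2, iSup₂_le_iff]
  refine forall₂_congr fun b hb => ?_
  rw [hw.withDensity_radialMeasure_Ici hv hb.1,
    hw.withDensity_radialMeasure_Ici (hv.pow_const _) hb.1, hw.radialMeasure_Ici hb.1,
    ENNReal.div_le_iff (ENNReal.ofReal_pos.mpr (hw.hat1_pos hb.1 hb.2)).ne' ENNReal.ofReal_ne_top,
    one_div (p / (p - 1)), ← hpq.one_sub_inv, ← one_div p]

end Muckenhoupt

section Polar

lemma smul_circleMap_zero {r : ℝ} (hr : r ≠ 0) (s t : ℝ) :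
    (s / r) • circleMap 0 r t = circleMap 0 s t := by
  rw [circleMap_zero, circleMap_zero, Complex.real_smul, Complex.ofReal_div, ← mul_assoc,
    div_mul_cancel₀ _ (Complex.ofReal_ne_zero.mpr hr)]

lemma measurable_circleMap_uncurry : Measurable fun x : ℝ × ℝ => circleMap 0 x.2 x.1 := by
  simp only [circleMap]
  fun_prop

lemma polarCoord_symm_eq_circleMap (x : ℝ × ℝ) :
    Complex.polarCoord.symm x = circleMap 0 x.1 x.2 := by
  rw [Complex.polarCoord_symm_apply, circleMap_zero, Complex.exp_mul_I, Complex.ofReal_cos,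
    Complex.ofReal_sin]

variable {φ : ℝ → ℝ}

lemma lintegral_ball_eq_lintegral_prod (G : ℂ → ℝ≥0∞) :
    ∫⁻ z in ball 0 1, G z = ∫⁻ x, ENNReal.ofReal x.2 * G (circleMap 0 x.2 x.1)
      ∂(volume.restrict (Ioo (-Real.pi) Real.pi)).prod (volume.restrict (Ioo 0 1)) := by
  have hind : ∀ x ∈ polarCoord.target,
      ENNReal.ofReal x.1 • (ball 0 1).indicator G (Complex.polarCoord.symm x) =
        (Iio 1 ×ˢ univ).indicator (fun x => ENNReal.ofReal x.1 * G (circleMap 0 x.1 x.2)) x := by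
    intro x hx
    have hx1 : (0 : ℝ) < x.1 := hx.1
    rw [polarCoord_symm_eq_circleMap]
    by_cases h : x.1 < 1 <;> simp [abs_of_pos hx1, h]
  have hset : Iio 1 ×ˢ univ ∩ polarCoord.target =
      Ioo (0 : ℝ) 1 ×ˢ Ioo (-Real.pi) Real.pi := by
    rw [polarCoord_target, prod_inter_prod, inter_comm (Iio _), Ioi_inter_Iio, univ_inter]
  rw [← lintegral_indicator measurableSet_ball, ← Complex.lintegral_comp_polarCoord_symm,
    setLIntegral_congr_fun polarCoord.open_target.measurableSet hind,
    setLIntegral_indicator (measurableSet_Iio.prod .univ), hset, Measure.volume_eq_prod,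
    ← Measure.prod_restrict, ← lintegral_prod_swap]
  rfl

lemma lintegral_ball_mul_eq_lintegral_prod (G : ℂ → ℝ≥0∞) :
    ∫⁻ z in ball 0 1, G z * ENNReal.ofReal (φ ‖z‖) =
      ∫⁻ x, ENNReal.ofReal (x.2 * φ x.2) * G (circleMap 0 x.2 x.1)
        ∂(volume.restrict (Ioo (-Real.pi) Real.pi)).prod (volume.restrict (Ioo 0 1)) := by
  rw [lintegral_ball_eq_lintegral_prod, Measure.prod_restrict]
  refine setLIntegral_congr_fun (measurableSet_Ioo.prod measurableSet_Ioo) fun x hx => ?_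
  have hx2 : 0 < x.2 := hx.2.1
  simp only [norm_circleMap_zero, abs_of_pos hx2, ENNReal.ofReal_mul hx2.le]
  ring

variable (hφ : AEMeasurable φ (volume.restrict (Ioo 0 1)))
include hφ

-- An inequality only, so that it applies to functions whose measurability is not known.
lemma lintegral_ball_mul_le_lintegral_radialMeasure (G : ℂ → ℝ≥0∞) :
    ∫⁻ z in ball 0 1, G z * ENNReal.ofReal (φ ‖z‖) ≤
      ∫⁻ t in Ioo (-Real.pi) Real.pi, ∫⁻ r, G (circleMap 0 r t) ∂radialMeasure φ := by
  simp only [lintegral_ball_mul_eq_lintegral_prod, lintegral_radialMeasure hφ]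
  exact lintegral_prod_le _

lemma lintegral_ball_mul_eq_lintegral_radialMeasure {G : ℂ → ℝ≥0∞} (hG : Measurable G) :
    ∫⁻ z in ball 0 1, G z * ENNReal.ofReal (φ ‖z‖) =
      ∫⁻ t in Ioo (-Real.pi) Real.pi, ∫⁻ r, G (circleMap 0 r t) ∂radialMeasure φ := by
  simp only [lintegral_ball_mul_eq_lintegral_prod, lintegral_radialMeasure hφ]
  exact lintegral_prod _ ((aemeasurable_ofReal_mul hφ).comp_snd.mul
    (hG.comp measurable_circleMap_uncurry).aemeasurable)

end Polar

section LpNorms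

variable {p : ℝ} {φ : ℝ → ℝ} {F G : ℂ → ℝ≥0∞} {f : ℂ → ℝ}

lemma LpR_eq_LpE_enorm (hp : 0 ≤ p) : LpR p φ f = LpE p φ fun z => ‖f z‖ₑ := by
  have hmul (z : ℂ) : ENNReal.ofReal (|f z| ^ p * φ ‖z‖) = ‖f z‖ₑ ^ p * ENNReal.ofReal (φ ‖z‖) := by
    rw [ENNReal.ofReal_mul (by positivity), Real.enorm_eq_ofReal_abs,
      ENNReal.ofReal_rpow_of_nonneg (abs_nonneg _) hp]
  simp only [LpR, LpE, hmul]

lemma LpE_mono (hp : 0 ≤ p) (h : ∀ z ∈ ball 0 1, F z ≤ G z) : LpE p φ F ≤ LpE p φ G := by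
  have hint : ∫⁻ z in ball 0 1, F z ^ p * ENNReal.ofReal (φ ‖z‖) ≤
      ∫⁻ z in ball 0 1, G z ^ p * ENNReal.ofReal (φ ‖z‖) :=
    setLIntegral_mono' measurableSet_ball fun z hz => by gcongr; exact h z hz
  unfold LpE
  gcongr

lemma LpE_const_mul (hp : 0 < p) {c : ℝ≥0∞} (hc : c ≠ ⊤) :
    LpE p φ (fun z => c * F z) = c * LpE p φ F := by
  simp only [LpE, ENNReal.mul_rpow_of_nonneg _ _ hp.le, mul_assoc]
  rw [lintegral_const_mul' _ _ (by finiteness), mul_div_assoc,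
    ENNReal.mul_rpow_of_nonneg _ _ (by positivity), one_div, ENNReal.rpow_rpow_inv hp.ne']

variable (hφ : AEMeasurable φ (volume.restrict (Ioo 0 1)))
include hφ

lemma LpE_le_of_forall_circleMap (hp : 0 ≤ p) (hG : Measurable G) {C : ℝ≥0∞} (hC : C ≠ ⊤)
    (h : ∀ t, ∫⁻ r, F (circleMap 0 r t) ^ p ∂radialMeasure φ ≤
      C * ∫⁻ r, G (circleMap 0 r t) ^ p ∂radialMeasure φ) :
    LpE p φ F ≤ C ^ (1 / p) * LpE p φ G := by
  have hint : ∫⁻ z in ball 0 1, F z ^ p * ENNReal.ofReal (φ ‖z‖) ≤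
      C * ∫⁻ z in ball 0 1, G z ^ p * ENNReal.ofReal (φ ‖z‖) := by
    rw [lintegral_ball_mul_eq_lintegral_radialMeasure hφ (hG.pow_const p),
      ← lintegral_const_mul' _ _ hC]
    exact (lintegral_ball_mul_le_lintegral_radialMeasure hφ _).trans (lintegral_mono h)
  rw [LpE, LpE, ← ENNReal.mul_rpow_of_nonneg _ _ (by positivity), ← mul_div_assoc]
  gcongr

lemma LpE_indicator_comp_norm (hp : 0 < p) {g : ℝ → ℝ≥0∞} (hg : Measurable g) {S : Set ℝ}
    (hS : MeasurableSet S) :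
    LpE p φ (fun z => S.indicator g ‖z‖) =
      (2 * ∫⁻ r in S, g r ^ p ∂radialMeasure φ) ^ (1 / p) := by
  have hradial (t : ℝ) : ∫⁻ r, S.indicator g ‖circleMap 0 r t‖ ^ p ∂radialMeasure φ =
      ∫⁻ r in S, g r ^ p ∂radialMeasure φ := by
    rw [← lintegral_indicator hS]
    refine lintegral_congr_ae (ae_radialMeasure_of_forall_mem fun r hr => ?_)
    simp only [norm_circleMap_zero, abs_of_pos hr.1]
    by_cases hrS : r ∈ S <;> simp [hrS, hp]
  have hπ : volume (Ioo (-Real.pi) Real.pi) = 2 * ENNReal.ofReal Real.pi := by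
    rw [Real.volume_Ioo, sub_neg_eq_add, ← two_mul, ENNReal.ofReal_mul zero_le_two,
      ENNReal.ofReal_ofNat]
  have hmeas : Measurable fun z : ℂ => S.indicator g ‖z‖ ^ p :=
    ((hg.indicator hS).comp measurable_norm).pow_const p
  rw [LpE, lintegral_ball_mul_eq_lintegral_radialMeasure hφ hmeas]
  simp only [hradial, setLIntegral_const]
  rw [hπ, ← mul_assoc, mul_comm _ 2, ENNReal.mul_div_cancel_right
    (ENNReal.ofReal_pos.mpr Real.pi_pos).ne' ENNReal.ofReal_ne_top]

end LpNorms

section Operators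

variable {w : ℝ → ℝ} (hw : IsRadialWeight w) (f : ℂ → ℝ)
include hw

lemma ofReal_mul_mul_eq {s : ℝ} (hs : s ∈ Ioo (0 : ℝ) 1) (x : ℝ) :
    ENNReal.ofReal (x * (s * w s)) = ENNReal.ofReal (s * w s) * ENNReal.ofReal x := by
  rw [ENNReal.ofReal_mul' (hw.mul_nonneg hs.1.le hs.2), mul_comm]

lemma HE_circleMap {r : ℝ} (hr : 0 < r) (t : ℝ) :
    HE w f (circleMap 0 r t) =
      ⨍⁻ s in Ici r, ENNReal.ofReal (f (circleMap 0 s t)) ∂radialMeasure w := by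
  rw [HE, setLAverage_eq, hw.radialMeasure_Ici hr.le,
    setLIntegral_Ici_radialMeasure hw.aemeasurable _ hr.le, norm_circleMap_zero, abs_of_pos hr]
  congr 1
  refine setLIntegral_congr_fun measurableSet_Ioo fun s hs => ?_
  simp only [smul_circleMap_zero hr.ne', ofReal_mul_mul_eq hw ⟨hr.trans hs.1, hs.2⟩]

lemma HstarE_circleMap {r : ℝ} (hr : r ∈ Ioo (0 : ℝ) 1) (t : ℝ) :
    HstarE w f (circleMap 0 r t) =
      tailAverageAdjoint (radialMeasure w) (fun s => ENNReal.ofReal (f (circleMap 0 s t))) r := by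
  rw [HstarE, tailAverageAdjoint, setLIntegral_Iic_radialMeasure hw.aemeasurable _ hr.2,
    norm_circleMap_zero, abs_of_pos hr.1]
  refine setLIntegral_congr_fun measurableSet_Ioo fun s hs => ?_
  simp only [smul_circleMap_zero hr.1.ne', ofReal_mul_mul_eq hw ⟨hs.1, hs.2.trans hr.2⟩,
    hw.radialMeasure_Ici hs.1.le, mul_div_assoc]

lemma setLAverage_Ici_le_MradE_comp_norm (k : ℝ → ℝ) {b : ℝ} (hb : 0 ≤ b) {z : ℂ}
    (hbz : b < ‖z‖) :
    ⨍⁻ s in Ici b, ‖k s‖ₑ ∂radialMeasure w ≤ MradE w (fun z => k ‖z‖) z := by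
  refine le_trans (le_of_eq ?_) (le_iSup₂_of_le b ⟨hb, hbz⟩ le_rfl)
  rw [setLAverage_eq, hw.radialMeasure_Ici hb,
    setLIntegral_Ici_radialMeasure hw.aemeasurable _ hb]
  congr 1
  refine setLIntegral_congr_fun measurableSet_Ioo fun s hs => ?_
  have hs0 : 0 < s := hb.trans_lt hs.1
  simp only [ofReal_mul_mul_eq hw ⟨hs0, hs.2⟩, Real.enorm_eq_ofReal_abs, norm_smul,
    Real.norm_of_nonneg (div_nonneg hs0.le (norm_nonneg z)),
    div_mul_cancel₀ _ (hb.trans_lt hbz).ne']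

lemma SE_le_HE_add_HstarE {z : ℂ} (hz : z ∈ ball 0 1) : SE w f z ≤ HE w f z + HstarE w f z := by
  have hz1 : ‖z‖ < 1 := mem_ball_zero_iff.mp hz
  have hsub : Ioo (0 : ℝ) 1 ⊆ Ioo ‖z‖ 1 ∪ Ioc 0 ‖z‖ := fun s hs =>
    (lt_or_ge ‖z‖ s).imp (fun h => ⟨h, hs.2⟩) fun h => ⟨hs.1, h⟩
  refine (lintegral_mono_set hsub).trans ((lintegral_union_le _ _ _).trans ?_)
  gcongr ?_ + ?_
  · rw [HE, div_eq_mul_inv, ← lintegral_mul_const' _ _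
      (ENNReal.inv_ne_top.mpr (ENNReal.ofReal_pos.mpr (hw.hat1_pos (norm_nonneg z) hz1)).ne')]
    refine setLIntegral_mono' measurableSet_Ioo fun s hs => ?_
    rw [← div_eq_mul_inv]
    gcongr
    exact le_add_of_nonneg_left (hw.hat1_nonneg ((norm_nonneg z).trans hs.1.le))
  · rw [HstarE, ← restrict_Ioo_eq_restrict_Ioc]
    gcongr with s
    exact le_add_of_nonneg_right (hw.hat1_nonneg (norm_nonneg z))

lemma inv_ofReal_hat1_le {b s r : ℝ} (hb : 0 ≤ b) (hbs : b ≤ s) (hbr : b ≤ r) :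
    (ENNReal.ofReal (hat1 w b))⁻¹ ≤ 2 * (ENNReal.ofReal (hat1 w s + hat1 w r))⁻¹ := by
  have hsum : ENNReal.ofReal (hat1 w s + hat1 w r) ≤ 2 * ENNReal.ofReal (hat1 w b) := by
    rw [← ENNReal.ofReal_ofNat 2, ← ENNReal.ofReal_mul zero_le_two]
    exact ENNReal.ofReal_le_ofReal (by linarith [hw.hat1_anti hb hbs, hw.hat1_anti hb hbr])
  rw [mul_comm, ← ENNReal.div_le_iff_le_mul (.inl two_ne_zero) (.inl ENNReal.ofNat_ne_top),
    div_eq_mul_inv, ← ENNReal.mul_inv (.inr ENNReal.ofNat_ne_top) (.inr two_ne_zero), mul_comm]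
  exact ENNReal.inv_le_inv.mpr hsum

lemma MradE_le_two_mul_SE {z : ℂ} (hz : z ∈ ball 0 1) :
    MradE w f z ≤ 2 * SE w (fun z => |f z|) z := by
  refine iSup₂_le fun b hb => ?_
  have hb1 : b < 1 := hb.2.trans (mem_ball_zero_iff.mp hz)
  rw [div_eq_mul_inv, SE, ← lintegral_mul_const' _ _
    (ENNReal.inv_ne_top.mpr (ENNReal.ofReal_pos.mpr (hw.hat1_pos hb.1 hb1)).ne'),
    ← lintegral_const_mul' _ _ ENNReal.ofNat_ne_top]
  refine (setLIntegral_mono' measurableSet_Ioo fun s hs => ?_).trans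
    (lintegral_mono_set (Ioo_subset_Ioo_left hb.1))
  rw [div_eq_mul_inv (ENNReal.ofReal _), mul_left_comm 2]
  gcongr
  exact inv_ofReal_hat1_le hw hb.1 hs.1.le hb.2.le

end Operators

section Boundedness

/-- Boundedness on `L^p_φ` of an operator `T` from real to `ℝ≥0∞`-valued functions on the disc. -/
def IsLpBounded (p : ℝ) (φ : ℝ → ℝ) (T : (ℂ → ℝ) → ℂ → ℝ≥0∞) : Prop :=
  ∃ C > (0 : ℝ), ∀ f : ℂ → ℝ, Measurable f → LpR p φ f < ⊤ →
    LpE p φ (T f) ≤ ENNReal.ofReal C * LpR p φ f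

/-- Boundedness of `T` on the nonnegative functions of `L^p_φ`, the notion used for operators that
are given by integrals of `f` rather than of `|f|`. -/
def IsLpBoundedOnNonneg (p : ℝ) (φ : ℝ → ℝ) (T : (ℂ → ℝ) → ℂ → ℝ≥0∞) : Prop :=
  ∃ C > (0 : ℝ), ∀ f : ℂ → ℝ, Measurable f → (∀ z, 0 ≤ f z) → LpR p φ f < ⊤ →
    LpE p φ (T f) ≤ ENNReal.ofReal C * LpR p φ f

variable {p : ℝ} {φ : ℝ → ℝ} {S T : (ℂ → ℝ) → ℂ → ℝ≥0∞}

lemma IsLpBoundedOnNonneg.mono (hp : 0 ≤ p) (hT : IsLpBoundedOnNonneg p φ T)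
    (hST : ∀ f, ∀ z ∈ ball 0 1, S f z ≤ T f z) : IsLpBoundedOnNonneg p φ S := by
  obtain ⟨C, hC, hbound⟩ := hT
  exact ⟨C, hC, fun f hf hf0 hf_top => (LpE_mono hp (hST f)).trans (hbound f hf hf0 hf_top)⟩

lemma IsLpBoundedOnNonneg.isLpBounded (hp : 0 < p) (hT : IsLpBoundedOnNonneg p φ T) {c : ℝ≥0}
    (hc : c ≠ 0) (hST : ∀ f, ∀ z ∈ ball 0 1, S f z ≤ c * T (fun z => |f z|) z) :
    IsLpBounded p φ S := by
  obtain ⟨C, hC, hbound⟩ := hT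
  refine ⟨c * C, by positivity, fun f hf hf_top => ?_⟩
  have habs : LpR p φ (fun z => |f z|) = LpR p φ f := by simp only [LpR, abs_abs]
  have hf_abs := hbound (fun z => |f z|) (by fun_prop) (fun z => abs_nonneg _) (habs ▸ hf_top)
  calc LpE p φ (S f) ≤ c * LpE p φ (T fun z => |f z|) := by
        rw [← LpE_const_mul hp ENNReal.coe_ne_top]
        exact LpE_mono hp.le (hST f)
    _ ≤ c * (ENNReal.ofReal C * LpR p φ f) := by rw [← habs]; gcongr
    _ = ENNReal.ofReal (c * C) * LpR p φ f := by
        rw [ENNReal.ofReal_mul c.coe_nonneg, ENNReal.ofReal_coe_nnreal, mul_assoc]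

variable {w v : ℝ → ℝ} (hw : IsRadialWeight w)
include hw

lemma setLAverage_Ici_mul_rpow_le_LpE_MradE (hp : 0 < p)
    (hφ : AEMeasurable φ (volume.restrict (Ioo 0 1))) (k : ℝ → ℝ) {b : ℝ} (hb : 0 ≤ b) :
    (⨍⁻ s in Ici b, ‖k s‖ₑ ∂radialMeasure w) * (2 * radialMeasure φ (Ici b)) ^ (1 / p) ≤
      LpE p φ (MradE w fun z => k ‖z‖) := by
  set a := ⨍⁻ s in Ici b, ‖k s‖ₑ ∂radialMeasure w
  have hIoi : radialMeasure φ (Ioi b) = radialMeasure φ (Ici b) :=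
    measure_congr (((withDensity_absolutelyContinuous _ _).trans
      Measure.absolutelyContinuous_restrict).ae_le Ioi_ae_eq_Ici)
  calc a * (2 * radialMeasure φ (Ici b)) ^ (1 / p)
      = (2 * ∫⁻ _ in Ioi b, a ^ p ∂radialMeasure φ) ^ (1 / p) := by
        rw [setLIntegral_const, hIoi, mul_left_comm,
          ENNReal.mul_rpow_of_nonneg (a ^ p) _ (by positivity), one_div,
          ENNReal.rpow_rpow_inv hp.ne']
    _ = LpE p φ fun z => (Ioi b).indicator (fun _ => a) ‖z‖ :=
        (LpE_indicator_comp_norm hφ hp measurable_const measurableSet_Ioi).symm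
    _ ≤ LpE p φ (MradE w fun z => k ‖z‖) := by
        refine LpE_mono hp.le fun z _ => indicator_apply_le' (fun hz => ?_) fun _ => zero_le
        exact setLAverage_Ici_le_MradE_comp_norm hw k hb hz

lemma rpow_mul_setLIntegral_le_of_LpE_MradE_le (hp : 0 < p)
    (hφ : AEMeasurable φ (volume.restrict (Ioo 0 1))) {D : ℝ≥0∞}
    (hD : ∀ f : ℂ → ℝ, Measurable f → LpR p φ f < ⊤ → LpE p φ (MradE w f) ≤ D * LpR p φ f)
    {b : ℝ} (hb : b ∈ Ico (0 : ℝ) 1) {K : ℝ → ℝ≥0} (hK : Measurable K)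
    (hK_top : ∫⁻ s in Ici b, (K s : ℝ≥0∞) ^ p ∂radialMeasure φ ≠ ⊤) :
    radialMeasure φ (Ici b) ^ (1 / p) * ∫⁻ s in Ici b, K s ∂radialMeasure w ≤
      D * radialMeasure w (Ici b) *
        (∫⁻ s in Ici b, (K s : ℝ≥0∞) ^ p ∂radialMeasure φ) ^ (1 / p) := by
  let k (s : ℝ) : ℝ := (Ici b).indicator (fun s => (K s : ℝ)) s
  have hk : Measurable k := hK.coe_nnreal_real.indicator measurableSet_Ici
  have hk_enorm (s : ℝ) : ‖k s‖ₑ = (Ici b).indicator (fun s => (K s : ℝ≥0∞)) s := by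
    by_cases hs : s ∈ Ici b <;> simp [k, hs, -mem_Ici]
  have hk_norm : LpR p φ (fun z => k ‖z‖) =
      (2 * ∫⁻ s in Ici b, (K s : ℝ≥0∞) ^ p ∂radialMeasure φ) ^ (1 / p) := by
    simp only [LpR_eq_LpE_enorm hp.le, hk_enorm]
    exact LpE_indicator_comp_norm hφ hp hK.coe_nnreal_ennreal measurableSet_Ici
  have hk_avg : ⨍⁻ s in Ici b, ‖k s‖ₑ ∂radialMeasure w =
      (∫⁻ s in Ici b, K s ∂radialMeasure w) / radialMeasure w (Ici b) := by
    simp only [setLAverage_eq, hk_enorm, setLIntegral_indicator measurableSet_Ici, inter_self]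
  have hw_pos : radialMeasure w (Ici b) ≠ 0 := by
    rw [hw.radialMeasure_Ici hb.1]
    exact (ENNReal.ofReal_pos.mpr (hw.hat1_pos hb.1 hb.2)).ne'
  have := hw.isFiniteMeasure_radialMeasure
  have hbound := (setLAverage_Ici_mul_rpow_le_LpE_MradE hw hp hφ k hb.1).trans
    (hD _ (hk.comp measurable_norm) (by rw [hk_norm]; finiteness))
  rw [hk_norm, hk_avg, ENNReal.mul_rpow_of_nonneg _ _ (by positivity),
    ENNReal.mul_rpow_of_nonneg _ _ (by positivity), mul_left_comm, mul_left_comm D,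
    ENNReal.mul_le_mul_iff_right (by simp) (by finiteness), ← ENNReal.mul_div_right_comm,
    ENNReal.div_le_iff hw_pos (measure_ne_top _ _)] at hbound
  rwa [mul_comm, mul_right_comm]

lemma Ap2_lt_top_of_isLpBounded_MradE (hp : 1 < p) (hv : Measurable v)
    (hv_pos : ∀ s ∈ Ico (0 : ℝ) 1, 0 < v s)
    (hM : IsLpBounded p (fun s => w s * v s) (MradE w)) : Ap2 p w v < ⊤ := by
  obtain ⟨C, -, hC⟩ := hM
  have hpair := isDualWeightPair_radialMeasure (w := w) hp hv hv_pos
  have := hw.isFiniteMeasure_radialMeasure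
  refine lt_of_le_of_lt ((Ap2_le_iff_isTailMuckenhoupt hp hv hw).mpr ?_)
    (ENNReal.ofReal_lt_top (r := C))
  rw [isTailMuckenhoupt_radialMeasure_iff hpair.holderConjugate]
  refine fun b hb => hpair.rpow_mul_rpow_le_of_forall measurableSet_Ici fun K hK hK_top => ?_
  rw [withDensity_radialMeasure hw hv] at hK_top ⊢
  exact rpow_mul_setLIntegral_le_of_LpE_MradE_le hw (by positivity) (hw.aemeasurable_mul hv) hC hb
    hK hK_top

lemma isLpBoundedOnNonneg_HE_add_HstarE_of_Ap2_lt_top (hp : 1 < p) (hv : Measurable v)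
    (hv_pos : ∀ s ∈ Ico (0 : ℝ) 1, 0 < v s) (hA : Ap2 p w v < ⊤) :
    IsLpBoundedOnNonneg p (fun s => w s * v s) fun f z => HE w f z + HstarE w f z := by
  have hp0 : 0 ≤ p := by positivity
  have := hw.isFiniteMeasure_radialMeasure
  obtain ⟨C, hC, hbound⟩ := ((Ap2_le_iff_isTailMuckenhoupt hp hv hw).mp
    le_rfl).exists_lintegral_setLAverage_add_tailAverageAdjoint_rpow_le hA.ne
      (isDualWeightPair_radialMeasure hp hv hv_pos)
  rw [withDensity_radialMeasure hw hv] at hbound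
  have hC' : C ^ (1 / p) ≠ ⊤ := by finiteness
  refine ⟨(C ^ (1 / p)).toReal + 1, by positivity, fun f hf hf0 _ => ?_⟩
  calc LpE p (fun s => w s * v s) (fun z => HE w f z + HstarE w f z)
      ≤ C ^ (1 / p) * LpE p (fun s => w s * v s) (fun z => ENNReal.ofReal (f z)) := by
        refine LpE_le_of_forall_circleMap (hw.aemeasurable_mul hv) hp0 hf.ennreal_ofReal hC
          fun t => le_of_eq_of_le (lintegral_congr_ae ?_) (hbound _
            (hf.comp (measurable_circleMap_uncurry.comp measurable_prodMk_left)).ennreal_ofReal)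
        refine ae_radialMeasure_of_forall_mem fun r hr => ?_
        simp only [HE_circleMap hw f hr.1, HstarE_circleMap hw f hr]
    _ ≤ ENNReal.ofReal ((C ^ (1 / p)).toReal + 1) * LpR p (fun s => w s * v s) f := by
        simp only [LpR_eq_LpE_enorm hp0, Real.enorm_of_nonneg (hf0 _)]
        gcongr
        exact (ENNReal.le_ofReal_iff_toReal_le hC' (by positivity)).mpr
          (le_add_of_nonneg_right zero_le_one)

theorem calderon_tfae'_general (hp : 1 < p) (hv : Measurable v)
    (hv_pos : ∀ s ∈ Ico (0 : ℝ) 1, 0 < v s) :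
    [IsLpBoundedOnNonneg p (fun s => w s * v s) fun f z => HE w f z + HstarE w f z,
      IsLpBoundedOnNonneg p (fun s => w s * v s) (SE w),
      IsLpBounded p (fun s => w s * v s) (MradE w),
      Ap2 p w v < ⊤].TFAE := by
  have hp0 : 0 < p := by positivity
  tfae_have 1 → 2 := fun h => h.mono hp0.le fun f _ => SE_le_HE_add_HstarE hw f
  tfae_have 2 → 3 := fun h => h.isLpBounded hp0 (c := 2) two_ne_zero fun f _ =>
    MradE_le_two_mul_SE hw f
  tfae_have 3 → 4 := Ap2_lt_top_of_isLpBounded_MradE hw hp hv hv_pos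
  tfae_have 4 → 1 := isLpBoundedOnNonneg_HE_add_HstarE_of_Ap2_lt_top hw hp hv hv_pos
  tfae_finish

end Boundedness

/-- Theorem: Calderón operator, reformulated. Let `1 < p < ∞`, let `ω` be a
radial weight and let `ν : [0,1) → (0,∞)` be measurable with `ν ∈ L¹_ω([0,1))`, so that `ων`
is a radial weight. Then the following are equivalent: (i) `H_ω + H*_ω` is bounded on
`L^p_{ων}` (on nonnegative functions); (ii) `S_{ω₁,rad}` is bounded on `L^p_{ων}` (on
nonnegative functions); (iii) `M_{ω₁,rad}` is bounded on `L^p_{ων}`; (iv) `A_p(ω,ων) < ∞`. -/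
theorem calderon_tfae' (p : ℝ) (hp : 1 < p) (w v : ℝ → ℝ)
    (hw : IsRadialWeight w) (hvm : Measurable v) (hvpos : ∀ s ∈ Set.Ico (0:ℝ) 1, 0 < v s)
    (hvL1 : MeasureTheory.IntegrableOn (fun s => v s * w s) (Set.Ico (0:ℝ) 1)) :
    ((∃ C > (0:ℝ), ∀ f : ℂ → ℝ, Measurable f → (∀ z, 0 ≤ f z) →
        LpR p (fun s => w s * v s) f < ⊤ →
        LpE p (fun s => w s * v s) (fun z => HE w f z + HstarE w f z) ≤
          ENNReal.ofReal C * LpR p (fun s => w s * v s) f) ↔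
      Ap2 p w v < ⊤) ∧
    ((∃ C > (0:ℝ), ∀ f : ℂ → ℝ, Measurable f → (∀ z, 0 ≤ f z) →
        LpR p (fun s => w s * v s) f < ⊤ →
        LpE p (fun s => w s * v s) (SE w f) ≤
          ENNReal.ofReal C * LpR p (fun s => w s * v s) f) ↔
      Ap2 p w v < ⊤) ∧
    ((∃ C > (0:ℝ), ∀ f : ℂ → ℝ, Measurable f → LpR p (fun s => w s * v s) f < ⊤ →
        LpE p (fun s => w s * v s) (MradE w f) ≤
          ENNReal.ofReal C * LpR p (fun s => w s * v s) f) ↔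
      Ap2 p w v < ⊤) :=
  have h := calderon_tfae'_general hw hp hvm hvpos
  ⟨h.out 0 3, h.out 1 3, h.out 2 3⟩

end
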